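/- arXiv:1610.01916 — 2 statements merged into one kernel-verified Lean document; each statement's English description precedes it below -/
import Mathlib

section
/- Blow-up characterization of Gevrey asymptotics (Proposition 7.5): Let d ≥ 2, s > 0, P holomorphic on D(0;ρ_0) ⊆ ℂ^d with P(0) = 0 and P not identically zero, Π = Π_P(α,β;ρ_0), and f : Π → ℂ holomorphic. Then f admits a P-s-Gevrey asymptotic expansion in the estimate sense on Π if and only if for every ξ ∈ ℂ ∪ {∞} there exist r_ξ > 0 with b_ξ(D(0;r_ξ)) ⊆ D(0;ρ_0), a sequence (g_n^ξ) of bounded holomorphic functions on D(0;r_ξ), and constants C_ξ, A_ξ > 0 such that sup_{D(0;r_ξ)}|g_n^ξ| ≤ C_ξ·A_ξ^n·Γ(sn+1) for all n and |f(b_ξ(v)) − g_n^ξ(v)| ≤ C_ξ·A_ξ^n·Γ(sn+1)·|P(b_ξ(v))|^n for every n ∈ ℕ and every v in the (P∘b_ξ)-sector Π_{P∘b_ξ}(α,β;r_ξ) with b_ξ(v) ∈ Π. -/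
open Set Complex

noncomputable section

/-- Open polydisk of radius `r` centered at `0` in `ℂ^d`. -/
def polydisk (d : ℕ) (r : ℝ) : Set (Fin d → ℂ) :=
  {x | ∀ j, ‖x j‖ < r}

/-- The `P`-sector `Π_P(a,b;r)`. -/
def PSector (d : ℕ) (P : (Fin d → ℂ) → ℂ) (a b r : ℝ) : Set (Fin d → ℂ) :=
  {x | (∀ j, 0 < ‖x j‖ ∧ ‖x j‖ < r) ∧ P x ≠ 0 ∧
    ∃ θ ∈ Set.Ioo a b, P x = (‖P x‖ : ℂ) * Complex.exp (θ * Complex.I)}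

/-- Blow-up chart at `ξ ∈ ℂ`: `b_ξ(v) = (v₂, (ξ+v₁)·v₂, v₃, …)` (in dimension `d+2`). -/
def blowUpC (d : ℕ) (ξ : ℂ) (v : Fin (d + 2) → ℂ) : Fin (d + 2) → ℂ :=
  fun i => if i = 0 then v 1 else if i = 1 then (ξ + v 0) * v 1 else v i

/-- Blow-up chart at `∞`: `b_∞(v) = (v₁·v₂, v₂, v₃, …)` (in dimension `d+2`). -/
def blowUpInf (d : ℕ) (v : Fin (d + 2) → ℂ) : Fin (d + 2) → ℂ :=
  fun i => if i = 0 then v 0 * v 1 else v i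

lemma torusMap_mem_cb {n : ℕ} (c : Fin n → ℂ) {r : ℝ} (hr : 0 < r) (θ : Fin n → ℝ) :
    torusMap c (fun _ => r) θ ∈ Metric.closedBall c r := by
  rw [closedBall_pi _ hr.le]
  intro i _
  simp [torusMap, Complex.norm_exp_ofReal_mul_I, abs_of_pos hr]

lemma torusMap_norm {n : ℕ} (c : Fin n → ℂ) {r : ℝ} (hr : 0 < r) (θ : Fin n → ℝ) (i : Fin n) :
    ‖torusMap c (fun _ => r) θ i - c i‖ = r := by
  simp [torusMap, Complex.norm_exp_ofReal_mul_I, abs_of_pos hr]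

lemma torusMap_ne {n : ℕ} (c : Fin n → ℂ) {r : ℝ} (hr : 0 < r) (θ : Fin n → ℝ) (i : Fin n)
    (x : Fin n → ℂ) (hx : x ∈ Metric.ball c r) : torusMap c (fun _ => r) θ i - x i ≠ 0 := by
  rw [ball_pi _ hr] at hx
  have h1 := hx i (mem_univ _)
  have h2 := torusMap_norm c hr θ i
  intro h
  rw [sub_eq_zero] at h
  rw [h] at h2
  rw [Metric.mem_ball, dist_eq_norm] at h1
  linarith

lemma torusMap_cont {n : ℕ} (c : Fin n → ℂ) (R : Fin n → ℝ) : Continuous (torusMap c R) := by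
  unfold torusMap
  fun_prop

lemma torus_cauchy : ∀ (n : ℕ) (c : Fin n → ℂ) (r : ℝ) (_ : 0 < r) (f : (Fin n → ℂ) → ℂ)
    (_ : ContinuousOn f (Metric.closedBall c r))
    (_ : ∀ x ∈ Metric.closedBall c r, ∀ i,
      DifferentiableAt ℂ (fun z => f (Function.update x i z)) (x i))
    (x : Fin n → ℂ) (_ : x ∈ Metric.ball c r),
    torusIntegral (fun ζ => (∏ j, (ζ j - x j))⁻¹ * f ζ) c (fun _ => r) =
      (2 * Real.pi * I) ^ n * f x := by
  intro n
  induction n with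
  | zero =>
    intro c r hr f hc hd x hx
    rw [torusIntegral_dim0]
    simp [Subsingleton.elim c x]
  | succ n ih =>
    intro c r hr f hc hd x hx
    have hint : TorusIntegrable (fun ζ => (∏ j, (ζ j - x j))⁻¹ * f ζ) c (fun _ => r) := by
      apply ContinuousOn.integrableOn_compact isCompact_Icc
      apply Continuous.continuousOn
      apply Continuous.mul
      · apply Continuous.inv₀
        · apply continuous_finsetProd
          intro i _
          exact (continuous_pi_iff.1 (torusMap_cont c (fun _ => r)) i).sub continuous_const
        · intro θ
          exact Finset.prod_ne_zero_iff.2 fun i _ => torusMap_ne c hr θ i x hx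
      · exact hc.comp_continuous (torusMap_cont c _) (torusMap_mem_cb c hr)
    rw [torusIntegral_succ hint]
    have hx' := hx
    rw [ball_pi _ hr] at hx'
    have hmem : ∀ z : ℂ, z ∈ Metric.closedBall (c 0) r → ∀ y : Fin n → ℂ,
        y ∈ Metric.closedBall (c ∘ Fin.succ) r →
        (Fin.cons z y : Fin (n+1) → ℂ) ∈ Metric.closedBall c r := by
      intro z hz y hy
      rw [closedBall_pi _ hr.le] at hy ⊢
      intro i _
      refine Fin.cases ?_ ?_ i
      · simpa using hz
      · intro j
        simpa using hy j (mem_univ _)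
    have htail : (fun j : Fin n => x j.succ) ∈ Metric.ball (c ∘ Fin.succ) r := by
      rw [ball_pi _ hr]
      intro i _
      exact hx' i.succ (mem_univ _)
    have key : ∀ z ∈ Metric.sphere (c 0) r,
        torusIntegral (fun y : Fin n → ℂ => (∏ j, ((Fin.cons z y : Fin (n+1) → ℂ) j - x j))⁻¹ *
          f (Fin.cons z y)) (c ∘ Fin.succ) ((fun _ => r) ∘ Fin.succ) =
        (z - x 0)⁻¹ • ((2 * Real.pi * I) ^ n * f (Fin.cons z fun j => x j.succ)) := by
      intro z hz
      have hz' := Metric.sphere_subset_closedBall hz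
      have := ih (c ∘ Fin.succ) r hr (fun y => f (Fin.cons z y)) ?_ ?_ (fun j => x j.succ) htail
      · rw [← this, smul_eq_mul, ← torusIntegral_const_mul]
        congr 1
        ext y
        rw [Fin.prod_univ_succ]
        simp only [Fin.cons_zero, Fin.cons_succ, mul_inv]
        ring
      · refine hc.comp ?_ (fun y hy => hmem z hz' y hy)
        apply Continuous.continuousOn
        exact (continuous_const).finCons continuous_id
      · intro y hy i
        have := hd (Fin.cons z y) (hmem z hz' y hy) i.succ
        simpa [Fin.cons_update] using this
    have e1 : ((fun _ => r : Fin (n+1) → ℝ) 0) = r := rfl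
    rw [circleIntegral.integral_congr hr.le key]
    rw [Complex.circleIntegral_sub_inv_smul_of_differentiable_on_off_countable countable_empty
      (hx' 0 (mem_univ _))]
    · rw [smul_eq_mul, pow_succ]
      have : (Fin.cons (x 0) fun j => x j.succ : Fin (n+1) → ℂ) = x := by
        ext i; refine Fin.cases ?_ ?_ i <;> simp
      rw [this]; ring
    · apply ContinuousOn.mul continuousOn_const
      refine hc.comp ?_ (fun z hz => hmem z hz _ (Metric.ball_subset_closedBall htail))
      apply Continuous.continuousOn
      refine continuous_pi fun j => ?_
      refine Fin.cases ?_ (fun k => ?_) j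
      · simpa using continuous_id'
      · simpa using continuous_const
    · intro z hz
      have := hd (Fin.cons z fun j => x j.succ)
        (hmem z (Metric.ball_subset_closedBall hz.1) _ (Metric.ball_subset_closedBall htail)) 0
      simp only [Fin.update_cons_zero, Fin.cons_zero] at this
      exact (differentiableAt_const _).mul this

lemma osgood {n : ℕ} {Ω : Set (Fin n → ℂ)} (hΩ : IsOpen Ω) {f : (Fin n → ℂ) → ℂ}
    (hc : ContinuousOn f Ω)
    (hd : ∀ x ∈ Ω, ∀ i, DifferentiableAt ℂ (fun z => f (Function.update x i z)) (x i)) :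
    AnalyticOnNhd ℂ f Ω := by
  intro c hcΩ
  obtain ⟨r, hr, hrΩ⟩ := Metric.nhds_basis_closedBall.mem_iff.1 (hΩ.mem_nhds hcΩ)
  let K := (Icc (0 : Fin n → ℝ) fun _ => 2 * Real.pi)
  have : CompactSpace K := isCompact_iff_compactSpace.1 isCompact_Icc
  let Z : Fin n → C(K, ℂ) := fun j => ⟨fun θ => torusMap c (fun _ => r) θ.1 j,
    (continuous_pi_iff.1 (torusMap_cont c (fun _ => r)) j).comp continuous_subtype_val⟩
  let F : C(K, ℂ) := ⟨fun θ => (∏ i : Fin n, (r * exp (θ.1 i * I) * I : ℂ)) *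
      f (torusMap c (fun _ => r) θ.1), by
    apply Continuous.mul
    · apply continuous_finsetProd
      intro i _
      have : Continuous fun θ : K => θ.1 i := (continuous_apply i).comp continuous_subtype_val
      have h2 : Continuous fun t : ℝ => (r : ℂ) * exp (t * I) * I := by fun_prop
      exact h2.comp this
    · exact (hc.mono hrΩ).comp_continuous ((torusMap_cont c _).comp continuous_subtype_val)
        (fun θ => torusMap_mem_cb c hr θ.1)⟩
  let D : (Fin n → ℂ) → C(K, ℂ) := fun x => ∏ j, (Z j - x j • (1 : C(K, ℂ)))
  have hDapp : ∀ x (θ : K), D x θ = ∏ j, (torusMap c (fun _ => r) θ.1 j - x j) := by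
    intro x θ
    simp [D, Z, ContinuousMap.prod_apply]
  have hDan : AnalyticAt ℂ D c := by
    apply Finset.analyticAt_fun_prod
    intro j _
    apply AnalyticAt.sub analyticAt_const
    apply AnalyticAt.fun_smul _ analyticAt_const
    exact (ContinuousLinearMap.proj (R := ℂ) (φ := fun _ : Fin n => ℂ) j).analyticAt c
  have hDunit : ∀ x ∈ Metric.ball c r, IsUnit (D x) := by
    intro x hx
    rw [ContinuousMap.isUnit_iff_forall_ne_zero]
    intro θ
    rw [hDapp]
    exact Finset.prod_ne_zero_iff.2 fun i _ => torusMap_ne c hr θ.1 i x hx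
  let μ : MeasureTheory.Measure K := MeasureTheory.Measure.comap Subtype.val MeasureTheory.volume
  have : MeasureTheory.IsFiniteMeasure μ := by
    constructor
    rw [MeasureTheory.Measure.comap_apply _ Subtype.val_injective
      (fun s hs => MeasurableSet.subtype_image measurableSet_Icc hs) _ MeasurableSet.univ]
    simp only [image_univ, Subtype.range_coe_subtype, Set.ofPred_mem_eq]
    exact isCompact_Icc.measure_lt_top
  have hi : ∀ φ : C(K, ℂ), MeasureTheory.Integrable φ μ := by
    intro φ
    exact φ.continuous.integrable_of_hasCompactSupport (HasCompactSupport.of_compactSpace _)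
  let Λ : C(K, ℂ) →L[ℂ] ℂ := LinearMap.mkContinuous
    { toFun := fun φ => ∫ θ, φ θ ∂μ
      map_add' := fun φ ψ => by
        simp only [ContinuousMap.add_apply]
        exact MeasureTheory.integral_add (hi φ) (hi ψ)
      map_smul' := fun a φ => by
        simp only [ContinuousMap.smul_apply, RingHom.id_apply]
        exact MeasureTheory.integral_smul a _ } (μ.real univ) (by
      intro φ
      refine (MeasureTheory.norm_integral_le_of_norm_le_const
        (Filter.Eventually.of_forall fun θ => φ.norm_coe_le_norm θ)).trans ?_
      rw [mul_comm])
  have hrep : ∀ x ∈ Metric.ball c r,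
      f x = ((2 * Real.pi * I) ^ n)⁻¹ * Λ (Ring.inverse (D x) * F) := by
    intro x hx
    have := torus_cauchy n c r hr f (hc.mono hrΩ) (fun x hx i => hd x (hrΩ hx) i) x hx
    have h2 : ((2 * Real.pi * I : ℂ) ^ n) ≠ 0 := pow_ne_zero _ Complex.two_pi_I_ne_zero
    rw [eq_inv_mul_iff_mul_eq₀ h2, ← this]
    change _ = ∫ θ, (Ring.inverse (D x) * F) θ ∂μ
    unfold torusIntegral
    rw [← MeasureTheory.integral_subtype_comap measurableSet_Icc]
    congr 1
    ext θ
    obtain ⟨u, hu⟩ := hDunit x hx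
    have h3 : (Ring.inverse (D x)) θ = (D x θ)⁻¹ := by
      rw [← hu, Ring.inverse_unit]
      apply eq_inv_of_mul_eq_one_left
      rw [← ContinuousMap.mul_apply, Units.inv_mul, ContinuousMap.one_apply]
    rw [ContinuousMap.mul_apply, h3, hDapp]
    simp only [F, ContinuousMap.coe_mk, smul_eq_mul]
    ring
  have hev : (fun x => ((2 * Real.pi * I) ^ n)⁻¹ * Λ (Ring.inverse (D x) * F)) =ᶠ[nhds c] f := by
    filter_upwards [Metric.ball_mem_nhds c hr] with x hx using (hrep x hx).symm
  refine AnalyticAt.congr ?_ hev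
  apply AnalyticAt.mul analyticAt_const
  apply (Λ.analyticAt _).comp
  apply AnalyticAt.mul _ analyticAt_const
  obtain ⟨u, hu⟩ := hDunit c (Metric.mem_ball_self hr)
  have h5 : AnalyticAt ℂ Ring.inverse (D c) := by
    rw [← hu]; exact analyticAt_inverse u
  exact h5.comp hDan

/-- analyticity of parametric integrals -/
lemma param_int {n : ℕ} {Ω : Set (Fin n → ℂ)} (hΩ : IsOpen Ω) {a b : ℝ} (hab : a ≤ b)
    {F : ℝ → (Fin n → ℂ) → ℂ} (hc : ContinuousOn (fun p : ℝ × (Fin n → ℂ) => F p.1 p.2) (Icc a b ×ˢ Ω))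
    (ha : ∀ τ ∈ Icc a b, DifferentiableOn ℂ (F τ) Ω) :
    AnalyticOnNhd ℂ (fun x => ∫ τ in a..b, F τ x) Ω := by
  have hu : uIoc a b ⊆ Icc a b := by rw [uIoc_of_le hab]; exact Ioc_subset_Icc_self
  have hcτ : ∀ x ∈ Ω, ContinuousOn (fun τ => F τ x) (Icc a b) := by
    intro x hx
    exact hc.comp (f := fun τ => (τ, x)) (t := Icc a b ×ˢ Ω)
      (Continuous.continuousOn (by fun_prop)) (fun τ hτ => ⟨hτ, hx⟩)
  have hii : ∀ x ∈ Ω, IntervalIntegrable (fun τ => F τ x) MeasureTheory.volume a b := by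
    intro x hx
    apply ContinuousOn.intervalIntegrable
    rw [uIcc_of_le hab]; exact hcτ x hx
  have hmeas : ∀ x ∈ Ω, MeasureTheory.AEStronglyMeasurable (fun τ => F τ x)
      (MeasureTheory.volume.restrict (uIoc a b)) := by
    intro x hx
    exact (intervalIntegrable_iff.1 (hii x hx)).aestronglyMeasurable
  have hbd : ∀ x ∈ Ω, ∃ r > 0, ∃ M, Metric.closedBall x r ⊆ Ω ∧
      ∀ y ∈ Metric.closedBall x r, ∀ τ ∈ Icc a b, ‖F τ y‖ ≤ M := by
    intro x hx
    obtain ⟨r, hr, hrΩ⟩ := Metric.nhds_basis_closedBall.mem_iff.1 (hΩ.mem_nhds hx)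
    obtain ⟨M, hM⟩ := (isCompact_Icc.prod (isCompact_closedBall x r)).exists_bound_of_continuousOn
      (hc.mono (prod_mono_right hrΩ))
    exact ⟨r, hr, M, hrΩ, fun y hy τ hτ => hM (τ, y) ⟨hτ, hy⟩⟩
  apply osgood hΩ
  · intro x hx
    obtain ⟨r, hr, M, hrΩ, hM⟩ := hbd x hx
    apply ContinuousAt.continuousWithinAt
    have hev := Metric.closedBall_mem_nhds x hr
    apply intervalIntegral.continuousAt_of_dominated_interval (bound := fun _ => M)
    · filter_upwards [hev] with y hy
      exact (hmeas y (hrΩ hy))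
    · filter_upwards [hev] with y hy
      exact Filter.Eventually.of_forall fun τ hτ => hM y hy τ (hu hτ)
    · exact intervalIntegrable_const
    · refine Filter.Eventually.of_forall fun τ hτ => ?_
      exact ((ha τ (hu hτ)).continuousOn).continuousAt (hΩ.mem_nhds hx)
  · intro x hx i
    obtain ⟨r, hr, M, hrΩ, hM⟩ := hbd x hx
    have hupd : ∀ z ∈ Metric.closedBall (x i) r, Function.update x i z ∈ Metric.closedBall x r := by
      intro z hz
      rw [closedBall_pi _ hr.le]
      intro j _
      by_cases h : j = i
      · subst h; simpa using hz
      · simp [h, hr.le]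
    have hudiff : ∀ z, DifferentiableAt ℂ (fun z => Function.update x i z) z := by
      intro z
      rw [differentiableAt_pi]
      intro j
      by_cases h : j = i
      · subst h; simp
      · simp [h]
    have hFd : ∀ τ ∈ Icc a b, ∀ z ∈ Metric.closedBall (x i) r,
        DifferentiableAt ℂ (fun z => F τ (Function.update x i z)) z := by
      intro τ hτ z hz
      have h1 : DifferentiableAt ℂ (F τ) (Function.update x i z) :=
        (ha τ hτ).differentiableAt (hΩ.mem_nhds (hrΩ (hupd z hz)))
      exact h1.comp z (hudiff z)
    have hsub : ∀ z ∈ Metric.ball (x i) (r/2), Metric.closedBall z (r/2) ⊆ Metric.closedBall (x i) r := by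
      intro z hz
      apply Metric.closedBall_subset_closedBall'
      have := (Metric.mem_ball.1 hz).le
      linarith
    have := intervalIntegral.hasDerivAt_integral_of_dominated_loc_of_deriv_le
      (μ := MeasureTheory.volume) (a := a) (b := b)
      (F := fun z τ => F τ (Function.update x i z))
      (F' := fun z τ => deriv (fun z => F τ (Function.update x i z)) z)
      (x₀ := x i) (s := Metric.ball (x i) (r/2)) (bound := fun _ => M / (r/2))
      (Metric.ball_mem_nhds _ (by positivity)) ?_ ?_ ?_ ?_ ?_ ?_
    · exact this.2.differentiableAt
    · filter_upwards [Metric.closedBall_mem_nhds _ hr] with z hz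
      exact (hmeas _ (hrΩ (hupd z hz)))
    · exact hii _ (hrΩ (hupd _ (Metric.mem_closedBall_self hr.le)))
    · let h : ℕ → ℂ := fun k => ((r / (k + 1) : ℝ) : ℂ)
      have hpos : ∀ k : ℕ, 0 < r / ((k:ℝ) + 1) := fun k => by positivity
      have hh0 : ∀ k, h k ≠ 0 := fun k => by
        simp only [h, ne_eq, ofReal_eq_zero]; exact (hpos k).ne'
      have hhr : ∀ k, x i + h k ∈ Metric.closedBall (x i) r := by
        intro k
        simp only [h, Metric.mem_closedBall, dist_self_add_left, norm_real, Real.norm_eq_abs]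
        rw [abs_of_pos (hpos k)]
        apply div_le_self hr.le
        have : (0:ℝ) ≤ k := Nat.cast_nonneg k
        linarith
      have hht : Filter.Tendsto h Filter.atTop (nhdsWithin 0 {0}ᶜ) := by
        apply tendsto_nhdsWithin_iff.2
        refine ⟨?_, Filter.Eventually.of_forall hh0⟩
        have : Filter.Tendsto (fun k : ℕ => r / ((k:ℝ)+1)) Filter.atTop (nhds 0) :=
          tendsto_const_div_atTop_nhds_zero_nat r |>.comp (Filter.tendsto_add_atTop_nat 1) |>.congr
            (by intro k; simp)
        have h2 := (continuous_ofReal.tendsto 0).comp this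
        rw [ofReal_zero] at h2
        exact h2.congr (fun k => rfl)
      apply aestronglyMeasurable_of_tendsto_ae Filter.atTop
        (f := fun k τ => (h k)⁻¹ • (F τ (Function.update x i (x i + h k)) - F τ (Function.update x i (x i))))
      · intro k
        refine MeasureTheory.AEStronglyMeasurable.fun_const_smul ?_ _
        exact (hmeas _ (hrΩ (hupd _ (hhr k)))).sub
          (hmeas _ (hrΩ (hupd _ (Metric.mem_closedBall_self hr.le))))
      · rw [MeasureTheory.ae_restrict_iff' measurableSet_uIoc]
        refine Filter.Eventually.of_forall fun τ hτ => ?_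
        have h1 := (hFd τ (hu hτ) (x i) (Metric.mem_closedBall_self hr.le)).hasDerivAt
        rw [hasDerivAt_iff_tendsto_slope_zero] at h1
        exact h1.comp hht
    · refine Filter.Eventually.of_forall fun τ hτ z hz => ?_
      apply Complex.norm_deriv_le_of_forall_mem_sphere_norm_le (by positivity)
      · apply DifferentiableOn.diffContOnCl
        intro w hw
        have hw' := Metric.closure_ball_subset_closedBall hw
        exact (hFd τ (hu hτ) w (hsub z hz hw')).differentiableWithinAt
      · intro w hw
        exact hM _ (hupd w (hsub z hz (Metric.sphere_subset_closedBall hw))) τ (hu hτ)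
    · exact intervalIntegrable_const
    · refine Filter.Eventually.of_forall fun τ hτ z hz => ?_
      exact (hFd τ (hu hτ) z (hsub z hz (Metric.mem_closedBall_self (by positivity)))).hasDerivAt

lemma param_circle {n : ℕ} {Ω : Set (Fin n → ℂ)} (hΩ : IsOpen Ω) {c : ℂ} {R : ℝ} (hR : 0 ≤ R)
    {F : ℂ → (Fin n → ℂ) → ℂ}
    (hc : ContinuousOn (fun p : ℂ × (Fin n → ℂ) => F p.1 p.2) (Metric.sphere c R ×ˢ Ω))
    (ha : ∀ τ ∈ Metric.sphere c R, DifferentiableOn ℂ (F τ) Ω) :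
    AnalyticOnNhd ℂ (fun x => ∮ z in C(c, R), F z x) Ω := by
  unfold circleIntegral
  apply param_int hΩ Real.two_pi_pos.le (F := fun θ x => deriv (circleMap c R) θ • F (circleMap c R θ) x)
  · apply ContinuousOn.fun_smul
    · apply Continuous.continuousOn
      simp only [deriv_circleMap]
      fun_prop
    · refine hc.comp (f := fun p : ℝ × (Fin n → ℂ) => (circleMap c R p.1, p.2))
        (Continuous.continuousOn (by fun_prop)) ?_
      rintro ⟨θ, x⟩ ⟨_, hx⟩
      exact ⟨circleMap_mem_sphere c hR θ, hx⟩
  · intro τ _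
    exact (ha _ (circleMap_mem_sphere c hR τ)).fun_const_smul _

def inSec (α β : ℝ) (w : ℂ) : Prop :=
  w ≠ 0 ∧ ∃ θ ∈ Set.Ioo α β, w = (‖w‖ : ℂ) * Complex.exp (θ * Complex.I)

lemma inSec_freq {α β : ℝ} (h : α < β) : ∃ᶠ w in nhds (0 : ℂ), inSec α β w := by
  let θ := (α + β) / 2
  have ht : Filter.Tendsto (fun k : ℕ => ((1 / ((k : ℝ) + 1) : ℝ) : ℂ) * exp (θ * I)) Filter.atTop
      (nhds 0) := by
    have h1 : Filter.Tendsto (fun k : ℕ => ((1 / ((k : ℝ) + 1) : ℝ) : ℂ)) Filter.atTop (nhds 0) := by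
      have := (continuous_ofReal.tendsto 0).comp (tendsto_one_div_add_atTop_nhds_zero_nat (𝕜 := ℝ))
      rw [ofReal_zero] at this
      exact this.congr (fun k => rfl)
    simpa using h1.mul_const (exp (θ * I))
  refine ht.frequently (Filter.Frequently.of_forall fun k => ?_)
  have hp : 0 < 1 / ((k : ℝ) + 1) := by positivity
  refine ⟨mul_ne_zero (by exact_mod_cast hp.ne') (exp_ne_zero _), θ, ⟨?_, ?_⟩, ?_⟩
  · simp only [θ]; linarith
  · simp only [θ]; linarith
  · rw [norm_mul, Complex.norm_exp_ofReal_mul_I, Complex.norm_real, Real.norm_of_nonneg hp.le, mul_one]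

lemma slice_div {α β : ℝ} (hαβ : α < β) {δ : ℝ} (hδ : 0 < δ) {φ ψ : ℂ → ℂ}
    (hφ : AnalyticOnNhd ℂ φ (Metric.closedBall 0 δ))
    (hψ : AnalyticOnNhd ℂ ψ (Metric.closedBall 0 δ))
    (hne : ∀ z ∈ Metric.sphere (0 : ℂ) δ, φ z ≠ 0) (n : ℕ) (K : ℝ)
    (h : ∀ z ∈ Metric.closedBall (0 : ℂ) δ, inSec α β (φ z) → ‖ψ z‖ ≤ K * ‖φ z‖ ^ n) :
    φ 0 ^ n * ((2 * Real.pi * I)⁻¹ * ∮ z in C(0, δ), z⁻¹ * (ψ z / φ z ^ n)) = ψ 0 := by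
  set U := Metric.closedBall (0 : ℂ) δ with hU
  let u : ℂ → ℂ := fun z => ψ z / φ z ^ n
  have hmer : MeromorphicOn u U := fun z hz =>
    (hψ z hz).meromorphicAt.fun_div ((hφ z hz).meromorphicAt.fun_pow n)
  have hnz : ∀ z ∈ U, ¬ ∀ᶠ w in nhds z, φ w = 0 := by
    intro z hz hev
    have := hφ.eqOn_zero_of_preconnected_of_eventuallyEq_zero
      (convex_closedBall _ _).isPreconnected hz hev
    have hm : (δ : ℂ) ∈ Metric.sphere (0 : ℂ) δ := by simp [hδ.le]
    exact hne _ hm (this (Metric.sphere_subset_closedBall hm))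
  have hord : ∀ z ∈ U, 0 ≤ meromorphicOrderAt u z := by
    intro z hz
    by_cases hz0 : φ z = 0
    · by_contra hlt
      have hT := tendsto_cobounded_of_meromorphicOrderAt_neg (not_le.1 hlt)
      have hzb : z ∈ Metric.ball (0 : ℂ) δ := by
        rcases lt_or_eq_of_le (Metric.mem_closedBall.1 hz) with h1 | h1
        · exact h1
        · exact absurd hz0 (hne z h1)
      have hopen := (hφ z hz).eventually_constant_or_nhds_le_map_nhds.resolve_left (by
        rw [hz0]; exact hnz z hz)
      rw [hz0] at hopen
      have hfr : ∃ᶠ w in nhds z, inSec α β (φ w) := Filter.frequently_map.1 (Filter.Frequently.filter_mono (inSec_freq hαβ) hopen)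
      have hfr2 : ∃ᶠ w in nhds z, w ∈ ({z}ᶜ : Set ℂ) ∧ ‖u w‖ ≤ K := by
        refine (hfr.and_eventually (Metric.isOpen_ball.mem_nhds hzb)).mono ?_
        rintro w ⟨hw, hwb⟩
        refine ⟨?_, ?_⟩
        · rintro rfl
          exact hw.1 hz0
        · have := h w (Metric.ball_subset_closedBall hwb) hw
          simp only [u, norm_div, norm_pow]
          rw [div_le_iff₀ (pow_pos (norm_pos_iff.2 hw.1) n)]
          exact this
      have hfr3 : ∃ᶠ w in nhdsWithin z {z}ᶜ, ‖u w‖ ≤ K := by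
        rw [frequently_nhdsWithin_iff]
        exact hfr2.mono fun w hw => ⟨hw.2, hw.1⟩
      have hev : ∀ᶠ w in nhdsWithin z {z}ᶜ, K < ‖u w‖ :=
        (tendsto_norm_cobounded_atTop.comp hT).eventually_gt_atTop K
      obtain ⟨w, hw1, hw2⟩ := (hfr3.and_eventually hev).exists
      linarith
    · exact AnalyticAt.meromorphicOrderAt_nonneg
        ((hψ z hz).fun_div ((hφ z hz).fun_pow n) (pow_ne_zero _ hz0))
  let w := toMeromorphicNFOn u U
  have hwan : AnalyticOnNhd ℂ w U := by
    intro z hz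
    rw [← (meromorphicNFOn_toMeromorphicNFOn u U hz).meromorphicOrderAt_nonneg_iff_analyticAt,
      meromorphicOrderAt_toMeromorphicNFOn hmer hz]
    exact hord z hz
  have heq : ∀ z ∈ U, φ z ^ n * w z = ψ z := by
    intro z hz
    have h1 : ∀ᶠ y in nhdsWithin z {z}ᶜ, w y = u y := hmer.toMeromorphicNFOn_eq_self_on_nhdsNE hz
    have h2 := (hφ z hz).eventually_eq_zero_or_eventually_ne_zero.resolve_left (hnz z hz)
    have h3 : (fun y => φ y ^ n * w y) =ᶠ[nhdsWithin z {z}ᶜ] ψ := by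
      filter_upwards [h1, h2] with y hy1 hy2
      rw [hy1]
      exact mul_div_cancel₀ _ (pow_ne_zero _ hy2)
    rw [ContinuousAt.eventuallyEq_nhds_iff_eventuallyEq_nhdsNE
      (((hφ z hz).fun_pow n).fun_mul (hwan z hz)).continuousAt (hψ z hz).continuousAt] at h3
    exact h3.eq_of_nhds
  have hcirc : ∮ z in C(0, δ), z⁻¹ * (ψ z / φ z ^ n) = ∮ z in C(0, δ), (z - 0)⁻¹ • w z := by
    apply circleIntegral.integral_congr hδ.le
    intro z hz
    have := heq z (Metric.sphere_subset_closedBall hz)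
    simp only [sub_zero, smul_eq_mul]
    rw [← this, mul_div_cancel_left₀ _ (pow_ne_zero _ (hne z hz))]
  rw [hcirc, (hwan.differentiableOn).circleIntegral_sub_inv_smul (Metric.mem_ball_self hδ),
    smul_eq_mul, inv_mul_cancel_left₀ Complex.two_pi_I_ne_zero]
  exact heq 0 (Metric.mem_closedBall_self hδ.le)

lemma local_div {N : ℕ} {α β : ℝ} (hαβ : α < β) {Q : (Fin N → ℂ) → ℂ} {p : Fin N → ℂ} {R : ℝ} (hR : 0 < R)
    (hQ : AnalyticOnNhd ℂ Q (Metric.ball p R)) (hQ0 : ¬ ∀ᶠ x in nhds p, Q x = 0) :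
    ∃ r > 0, r ≤ R ∧ ∃ c > 0, ∀ (n : ℕ) (h : (Fin N → ℂ) → ℂ) (M K : ℝ),
      AnalyticOnNhd ℂ h (Metric.ball p R) → (∀ x ∈ Metric.ball p R, ‖h x‖ ≤ M) →
      (∀ x ∈ Metric.ball p R, inSec α β (Q x) → ‖h x‖ ≤ K * ‖Q x‖ ^ n) →
      ∃ q : (Fin N → ℂ) → ℂ, AnalyticOnNhd ℂ q (Metric.ball p r) ∧
        ∀ x ∈ Metric.ball p r, h x = Q x ^ n * q x ∧ ‖q x‖ ≤ M * c ^ n := by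
  rw [Filter.not_eventually] at hQ0
  obtain ⟨x₁, hx₁, hx₁b⟩ := (hQ0.and_eventually (Metric.ball_mem_nhds p (half_pos hR))).exists
  set u := x₁ - p with hu
  have hun : ‖u‖ < R / 2 := by rw [hu, ← dist_eq_norm]; exact hx₁b
  have hin : ∀ x ∈ Metric.ball p (R/2), ∀ z : ℂ, ‖z‖ ≤ 1 → x + z • u ∈ Metric.ball p R := by
    intro x hx z hz
    rw [mem_ball_iff_norm] at hx ⊢
    have : x + z • u - p = (x - p) + z • u := by abel
    rw [this]
    have h2 : ‖z • u‖ ≤ ‖u‖ := by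
      rw [norm_smul]; exact mul_le_of_le_one_left (norm_nonneg _) hz
    linarith [norm_add_le (x - p) (z • u)]
  have hlin : ∀ (x : Fin N → ℂ) (z : ℂ), AnalyticAt ℂ (fun z : ℂ => x + z • u) z := by
    intro x z
    exact analyticAt_const.fun_add (analyticAt_id.fun_smul analyticAt_const)
  have hpb : p ∈ Metric.ball p (R/2) := Metric.mem_ball_self (by positivity)
  have hφ : AnalyticOnNhd ℂ (fun z : ℂ => Q (p + z • u)) (Metric.closedBall 0 1) := by
    intro z hz
    exact AnalyticAt.comp (g := Q) (f := fun z : ℂ => p + z • u) (hQ _ (hin p hpb z (by simpa using hz))) (hlin p z)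
  have hφ1 : Q (p + (1:ℂ) • u) ≠ 0 := by
    rw [one_smul, hu, add_sub_cancel]; exact hx₁
  have hev := (hφ 0 (by simp)).eventually_eq_zero_or_eventually_ne_zero.resolve_left (by
    intro hev
    exact hφ1 (hφ.eqOn_zero_of_preconnected_of_eventuallyEq_zero
      (convex_closedBall _ _).isPreconnected (by simp) hev (by simp : (1:ℂ) ∈ Metric.closedBall 0 1)))
  rw [eventually_nhdsWithin_iff, Metric.eventually_nhds_iff_ball] at hev
  obtain ⟨ε, hε, hball⟩ := hev
  obtain ⟨δ, hδ, hδε, hδ1⟩ : ∃ δ > 0, δ < ε ∧ δ ≤ 1 :=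
    ⟨min (ε/2) 1, by positivity, lt_of_le_of_lt (min_le_left _ _) (by linarith), min_le_right _ _⟩
  let S := (fun z : ℂ => p + z • u) '' Metric.sphere 0 δ
  have hScomp : IsCompact S := (isCompact_sphere _ _).image (by fun_prop)
  have hOpen : IsOpen (Metric.ball p R ∩ Q ⁻¹' {0}ᶜ) :=
    hQ.continuousOn.isOpen_inter_preimage Metric.isOpen_ball isOpen_compl_singleton
  have hSsub : S ⊆ Metric.ball p R ∩ Q ⁻¹' {0}ᶜ := by
    rintro _ ⟨z, hz, rfl⟩
    have hz' : ‖z‖ = δ := by simpa using hz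
    refine ⟨hin p hpb z (by linarith), hball z ?_ ?_⟩
    · simp [hz', hδε]
    · intro h0
      rw [mem_singleton_iff] at h0
      rw [h0, norm_zero] at hz'
      linarith
  obtain ⟨r₁, hr₁, hthick⟩ := hScomp.exists_cthickening_subset_open hOpen hSsub
  have hTc : IsCompact (Metric.cthickening r₁ S) := hScomp.cthickening
  have hTne : (Metric.cthickening r₁ S).Nonempty := by
    have : (δ : ℂ) ∈ Metric.sphere (0:ℂ) δ := by simp [hδ.le]
    exact ⟨_, Metric.self_subset_cthickening S (mem_image_of_mem _ this)⟩
  obtain ⟨y, hyT, hymin⟩ := hTc.exists_isMinOn hTne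
    ((hQ.continuousOn.mono (fun x hx => (hthick hx).1)).norm)
  set c := ‖Q y‖ with hc
  have hcpos : 0 < c := norm_pos_iff.2 (hthick hyT).2
  have hmemT : ∀ x ∈ Metric.ball p r₁, ∀ z ∈ Metric.sphere (0:ℂ) δ, x + z • u ∈ Metric.cthickening r₁ S := by
    intro x hx z hz
    refine Metric.mem_cthickening_of_dist_le _ (p + z • u) _ _ ⟨z, hz, rfl⟩ ?_
    rw [dist_add_right]
    exact (Metric.mem_ball.1 hx).le
  refine ⟨min r₁ (R/2), by positivity, (min_le_right _ _).trans (by linarith), c⁻¹, by positivity, ?_⟩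
  intro n h M K hh hM hK
  have hb1 : ∀ x ∈ Metric.ball p (min r₁ (R/2)), x ∈ Metric.ball p r₁ := fun x hx =>
    Metric.ball_subset_ball (min_le_left _ _) hx
  have hb2 : ∀ x ∈ Metric.ball p (min r₁ (R/2)), x ∈ Metric.ball p (R/2) := fun x hx =>
    Metric.ball_subset_ball (min_le_right _ _) hx
  have hzδ : ∀ z ∈ Metric.sphere (0:ℂ) δ, ‖z‖ = δ := fun z hz => by simpa using hz
  refine ⟨fun x => (2 * Real.pi * I)⁻¹ * ∮ z in C(0, δ), z⁻¹ * (h (x + z • u) / Q (x + z • u) ^ n),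
    ?_, ?_⟩
  · have hhq : ∀ y ∈ Metric.cthickening r₁ S, AnalyticAt ℂ (fun y => h y / Q y ^ n) y := by
      intro y hy
      exact (hh y (hthick hy).1).fun_div ((hQ y (hthick hy).1).fun_pow n)
        (pow_ne_zero _ (hthick hy).2)
    have := param_circle (Ω := Metric.ball p (min r₁ (R/2))) Metric.isOpen_ball (c := 0) (R := δ) hδ.le
      (F := fun z x => z⁻¹ * (h (x + z • u) / Q (x + z • u) ^ n)) ?_ ?_
    · intro x hx
      exact analyticAt_const.fun_mul (this x hx)
    · apply ContinuousOn.mul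
      · apply ContinuousOn.inv₀ continuousOn_fst
        rintro ⟨z, x⟩ ⟨hz, _⟩ h0
        have := hzδ z hz
        simp only at h0
        rw [h0, norm_zero] at this
        linarith
      · have h5 : ContinuousOn (fun y => h y / Q y ^ n) (Metric.cthickening r₁ S) :=
          fun y hy => (hhq y hy).continuousAt.continuousWithinAt
        refine h5.comp (f := fun p : ℂ × (Fin N → ℂ) => p.2 + p.1 • u)
          (Continuous.continuousOn (by fun_prop)) ?_
        rintro ⟨z, x⟩ ⟨hz, hx⟩
        exact hmemT x (hb1 x hx) z hz
    · intro z hz x hx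
      apply DifferentiableAt.differentiableWithinAt
      apply DifferentiableAt.const_mul
      have h6 := (hhq _ (hmemT x (hb1 x hx) z hz)).differentiableAt
      exact h6.comp (f := fun x => x + z • u) x (by fun_prop)
  · intro x hx
    constructor
    · have := slice_div hαβ hδ (φ := fun z => Q (x + z • u)) (ψ := fun z => h (x + z • u)) ?_ ?_ ?_ n K ?_
      · simp only [zero_smul, add_zero] at this
        exact this.symm
      · intro z hz
        exact AnalyticAt.comp (g := Q) (f := fun z : ℂ => x + z • u) (hQ _ (hin x (hb2 x hx) z ((by simpa using hz : ‖z‖ ≤ δ).trans hδ1))) (hlin x z)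
      · intro z hz
        exact AnalyticAt.comp (g := h) (f := fun z : ℂ => x + z • u) (hh _ (hin x (hb2 x hx) z ((by simpa using hz : ‖z‖ ≤ δ).trans hδ1))) (hlin x z)
      · intro z hz
        exact (hthick (hmemT x (hb1 x hx) z hz)).2
      · intro z hz
        exact hK _ (hin x (hb2 x hx) z ((by simpa using hz : ‖z‖ ≤ δ).trans hδ1))
    · have hM0 : 0 ≤ M := (norm_nonneg _).trans (hM p (Metric.mem_ball_self hR))
      have hb : ∀ z ∈ Metric.sphere (0:ℂ) δ,
          ‖z⁻¹ * (h (x + z • u) / Q (x + z • u) ^ n)‖ ≤ δ⁻¹ * (M * c⁻¹ ^ n) := by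
        intro z hz
        have hm := hmemT x (hb1 x hx) z hz
        rw [norm_mul, norm_inv, hzδ z hz, norm_div, norm_pow, inv_pow, ← div_eq_mul_inv M]
        gcongr
        · exact hM _ (hthick hm).1
        · exact hymin hm
      have := circleIntegral.norm_integral_le_of_norm_le_const hδ.le hb
      rw [norm_mul, norm_inv]
      have h2 : ‖(2 * Real.pi * I : ℂ)‖ = 2 * Real.pi := by
        simp [abs_of_pos Real.pi_pos]
      rw [h2, inv_mul_le_iff₀ Real.two_pi_pos]
      refine this.trans (le_of_eq ?_)
      field_simp

lemma an_of_diff {n : ℕ} {Ω : Set (Fin n → ℂ)} (hΩ : IsOpen Ω) {f : (Fin n → ℂ) → ℂ}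
    (h : DifferentiableOn ℂ f Ω) : AnalyticOnNhd ℂ f Ω := by
  refine osgood hΩ h.continuousOn ?_
  intro x hx i
  have h1 : DifferentiableAt ℂ f (Function.update x i (x i)) := by
    rw [Function.update_eq_self]; exact h.differentiableAt (hΩ.mem_nhds hx)
  exact h1.comp (f := fun z => Function.update x i z) (x i)
    (hasFDerivAt_update x (x i)).differentiableAt

lemma glue {E : Type*} [NormedAddCommGroup E] [NormedSpace ℂ E] {O₁ O₂ : Set E} (h₁ : IsOpen O₁) (h₂ : IsOpen O₂)
    {g₁ g₂ : E → ℂ} (a₁ : AnalyticOnNhd ℂ g₁ O₁) (a₂ : AnalyticOnNhd ℂ g₂ O₂)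
    (he : ∀ v ∈ O₁, v ∈ O₂ → g₁ v = g₂ v) :
    ∃ g : E → ℂ, AnalyticOnNhd ℂ g (O₁ ∪ O₂) ∧ (∀ v ∈ O₁, g v = g₁ v) ∧
      (∀ v ∈ O₂, g v = g₂ v) := by
  classical
  refine ⟨fun v => if v ∈ O₁ then g₁ v else g₂ v, ?_, ?_, ?_⟩
  · rintro v (hv | hv)
    · refine (a₁ v hv).congr ?_
      filter_upwards [h₁.mem_nhds hv] with w hw
      rw [if_pos hw]
    · refine (a₂ v hv).congr ?_
      filter_upwards [h₂.mem_nhds hv] with w hw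
      split_ifs with h
      · exact (he w h hw).symm
      · rfl
  · intro v hv; exact if_pos hv
  · intro v hv
    show (if v ∈ O₁ then g₁ v else g₂ v) = _
    split_ifs with h
    · exact he v h hv
    · rfl

def tube (d : ℕ) (U : Set ℂ) (r : ℝ) : Set (Fin (d+2) → ℂ) :=
  {v | v 0 ∈ U ∧ ∀ j, j ≠ 0 → ‖v j‖ < r}

lemma tube_open {d : ℕ} {U : Set ℂ} (hU : IsOpen U) (r : ℝ) : IsOpen (tube d U r) := by
  have : tube d U r = (fun v => v 0) ⁻¹' U ∩ ⋂ j : Fin (d+2), ⋂ _ : j ≠ 0, {v | ‖v j‖ < r} := by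
    ext v; simp [tube]
  rw [this]
  refine (hU.preimage (continuous_apply 0)).inter ?_
  refine isOpen_iInter_of_finite fun j => isOpen_iInter_of_finite fun _ => ?_
  exact isOpen_lt (by fun_prop) continuous_const

lemma tube_mono {d : ℕ} {U V : Set ℂ} {r r' : ℝ} (h : U ⊆ V) (hr : r ≤ r') :
    tube d U r ⊆ tube d V r' := fun _ hv => ⟨h hv.1, fun j hj => (hv.2 j hj).trans_le hr⟩

lemma tube_union {d : ℕ} {U V : Set ℂ} {r : ℝ} :
    tube d (U ∪ V) r = tube d U r ∪ tube d V r := by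
  ext v; simp only [tube, mem_ofPred_eq, mem_union]; tauto

lemma tube_inter {d : ℕ} {U V : Set ℂ} {r : ℝ} {v : Fin (d+2) → ℂ} (h1 : v ∈ tube d U r)
    (h2 : v ∈ tube d V r) : v ∈ tube d (U ∩ V) r := ⟨⟨h1.1, h2.1⟩, h1.2⟩

lemma tube_update {d : ℕ} {U V : Set ℂ} {r : ℝ} {v : Fin (d+2) → ℂ} (h1 : v ∈ tube d U r)
    {t : ℂ} (ht : t ∈ V) : Function.update v 0 t ∈ tube d V r := by
  refine ⟨by simpa using ht, fun j hj => ?_⟩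
  rw [Function.update_of_ne hj]; exact h1.2 j hj

lemma tube_ball {d : ℕ} (t : ℂ) {r : ℝ} (hr : 0 < r) :
    tube d (Metric.ball t r) r = Metric.ball (Function.update (0 : Fin (d+2) → ℂ) 0 t) r := by
  ext v
  rw [ball_pi _ hr]
  simp only [tube, mem_ofPred_eq, mem_univ_pi]
  constructor
  · rintro ⟨h1, h2⟩ j
    by_cases hj : j = 0
    · subst hj; simpa using h1
    · rw [Function.update_of_ne hj]; simpa using h2 j hj
  · intro h
    refine ⟨by simpa using h 0, fun j hj => ?_⟩
    have := h j
    rw [Function.update_of_ne hj] at this; simpa using this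

lemma inSec_open (α β : ℝ) : IsOpen {w : ℂ | inSec α β w} := by
  rw [isOpen_iff_mem_nhds]
  rintro w ⟨hw0, θ, hθ, hw⟩
  have hc : ContinuousAt (fun z : ℂ => θ + arg (z * exp (-(θ * I)))) w := by
    refine continuousAt_const.add (ContinuousAt.comp (g := arg) (f := fun z : ℂ => z * exp (-(θ * I))) ?_ (by fun_prop))
    apply continuousAt_arg
    rw [hw, mul_assoc, ← exp_add, add_neg_cancel, exp_zero, mul_one]
    exact Or.inl (by simpa using hw0)
  have hval : θ + arg (w * exp (-(θ * I))) = θ := by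
    rw [hw, mul_assoc, ← exp_add, add_neg_cancel, exp_zero, mul_one, arg_ofReal_of_nonneg (norm_nonneg _), add_zero]
  have hev : ∀ᶠ z in nhds w, θ + arg (z * exp (-(θ * I))) ∈ Ioo α β := by
    apply hc.eventually
    beta_reduce; rw [hval]; exact Ioo_mem_nhds hθ.1 hθ.2
  filter_upwards [hev, isOpen_ne.mem_nhds hw0] with z hz hz0
  refine ⟨hz0, _, hz, ?_⟩
  have h1 := norm_mul_exp_arg_mul_I (z * exp (-(θ * I)))
  have h2 : ‖exp (-(θ * I))‖ = 1 := by
    rw [← neg_mul, ← ofReal_neg]; exact norm_exp_ofReal_mul_I _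
  rw [norm_mul, h2, mul_one] at h1
  push_cast
  rw [add_mul, exp_add, mul_left_comm, h1, mul_left_comm, ← exp_add, add_neg_cancel, exp_zero, mul_one]

lemma nz_dense {n : ℕ} (v : Fin n → ℂ) : ∃ᶠ w in nhds v, ∀ j, w j ≠ 0 := by
  have : ∀ᶠ k : ℝ in nhdsWithin 0 (Ioi 0), ∀ j, v j + (k:ℂ) ≠ 0 := by
    rw [Filter.eventually_all]
    intro j
    by_cases h : v j = 0
    · filter_upwards [self_mem_nhdsWithin] with k hk
      rw [h, zero_add]; exact_mod_cast (ne_of_gt hk)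
    · apply nhdsWithin_le_nhds
      have : ContinuousAt (fun k : ℝ => v j + (k:ℂ)) 0 := by fun_prop
      exact this.eventually_ne (by simpa using h)
  have ht : Filter.Tendsto (fun k : ℝ => fun j => v j + (k:ℂ)) (nhdsWithin 0 (Ioi 0)) (nhds v) := by
    have : Continuous (fun k : ℝ => fun j => v j + (k:ℂ)) := by fun_prop
    have h2 := this.tendsto 0
    simp only [ofReal_zero, add_zero] at h2
    exact h2.mono_left nhdsWithin_le_nhds
  exact ht.frequently this.frequently

/-- from estimate at nonzero coordinates to everywhere -/
lemma sec_ext {n : ℕ} {D : Set (Fin n → ℂ)} (hD : IsOpen D) {α β : ℝ} {h Q : (Fin n → ℂ) → ℂ}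
    (hh : ContinuousOn h D) (hQ : ContinuousOn Q D) {K : ℝ} {m : ℕ}
    (H : ∀ v ∈ D, (∀ j, v j ≠ 0) → inSec α β (Q v) → ‖h v‖ ≤ K * ‖Q v‖ ^ m) :
    ∀ v ∈ D, inSec α β (Q v) → ‖h v‖ ≤ K * ‖Q v‖ ^ m := by
  intro v hv hs
  by_contra hlt
  push Not at hlt
  have hhc := hh.continuousAt (hD.mem_nhds hv)
  have hQc := hQ.continuousAt (hD.mem_nhds hv)
  have e1 : ∀ᶠ w in nhds v, K * ‖Q w‖ ^ m < ‖h w‖ :=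
    (continuousAt_const.mul (hQc.norm.pow m)).eventually_lt hhc.norm hlt
  have e2 : ∀ᶠ w in nhds v, inSec α β (Q w) := hQc.eventually ((inSec_open α β).mem_nhds hs)
  obtain ⟨w, hw, h1, h2, h3⟩ := ((nz_dense v).and_eventually (e1.and (e2.and (hD.mem_nhds hv)))).exists
  exact absurd (H w h3 hw h2) (not_le.2 h1)

lemma uniq {n : ℕ} {O : Set (Fin n → ℂ)} (hO : IsOpen O) {Q q q' : (Fin n → ℂ) → ℂ}
    (hQ : ∀ v ∈ O, ¬ ∀ᶠ x in nhds v, Q x = 0) (hq : ContinuousOn q O) (hq' : ContinuousOn q' O)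
    (m : ℕ) (he : ∀ v ∈ O, Q v ^ m * q v = Q v ^ m * q' v) : ∀ v ∈ O, q v = q' v := by
  intro v hv
  by_contra hne
  have hc := hq.continuousAt (hO.mem_nhds hv)
  have hc' := hq'.continuousAt (hO.mem_nhds hv)
  have e1 : ∀ᶠ w in nhds v, q w - q' w ≠ 0 := (hc.sub hc').eventually_ne (sub_ne_zero.2 hne)
  refine hQ v hv ?_
  filter_upwards [e1, hO.mem_nhds hv] with w hw hwO
  have := he w hwO
  by_contra h0
  exact hw (sub_eq_zero.2 (mul_left_cancel₀ (pow_ne_zero _ h0) this))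

lemma compact_div {d : ℕ} {α β : ℝ} (hαβ : α < β) {Q : (Fin (d+2) → ℂ) → ℂ} {U : Set ℂ} (hU : IsOpen U)
    {r : ℝ} (hr : 0 < r) (hQ : AnalyticOnNhd ℂ Q (tube d U r))
    (hQ0 : ∀ v ∈ tube d U r, ¬ ∀ᶠ x in nhds v, Q x = 0)
    {L : Set ℂ} (hL : IsCompact L) (hLU : L ⊆ U) :
    ∃ V : Set ℂ, IsOpen V ∧ L ⊆ V ∧ V ⊆ U ∧ ∃ r' > 0, r' ≤ r ∧ ∃ c > 0,
      ∀ (n : ℕ) (h : (Fin (d+2) → ℂ) → ℂ) (M K : ℝ),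
        AnalyticOnNhd ℂ h (tube d U r) → (∀ x ∈ tube d U r, ‖h x‖ ≤ M) →
        (∀ x ∈ tube d U r, inSec α β (Q x) → ‖h x‖ ≤ K * ‖Q x‖ ^ n) →
        ∃ q : (Fin (d+2) → ℂ) → ℂ, AnalyticOnNhd ℂ q (tube d V r') ∧
          ∀ x ∈ tube d V r', h x = Q x ^ n * q x ∧ ‖q x‖ ≤ M * c ^ n := by
  let p : Set ℂ → Prop := fun L => ∃ V : Set ℂ, IsOpen V ∧ L ⊆ V ∧ V ⊆ U ∧ ∃ r' > 0, r' ≤ r ∧ ∃ c > 0,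
      ∀ (n : ℕ) (h : (Fin (d+2) → ℂ) → ℂ) (M K : ℝ),
        AnalyticOnNhd ℂ h (tube d U r) → (∀ x ∈ tube d U r, ‖h x‖ ≤ M) →
        (∀ x ∈ tube d U r, inSec α β (Q x) → ‖h x‖ ≤ K * ‖Q x‖ ^ n) →
        ∃ q : (Fin (d+2) → ℂ) → ℂ, AnalyticOnNhd ℂ q (tube d V r') ∧
          ∀ x ∈ tube d V r', h x = Q x ^ n * q x ∧ ‖q x‖ ≤ M * c ^ n
  refine hL.induction_on (p := p) ?_ ?_ ?_ ?_
  · refine ⟨∅, isOpen_empty, subset_rfl, empty_subset _, r, hr, le_rfl, 1, one_pos, ?_⟩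
    intro n h M K _ _ _
    exact ⟨0, fun x hx => hx.1.elim, fun x hx => hx.1.elim⟩
  · rintro s t hst ⟨V, h1, h2, h3⟩
    exact ⟨V, h1, hst.trans h2, h3⟩
  · rintro s t ⟨V₁, ho₁, hs₁, hu₁, r₁, hr₁, hrr₁, c₁, hc₁, H₁⟩ ⟨V₂, ho₂, hs₂, hu₂, r₂, hr₂, hrr₂, c₂, hc₂, H₂⟩
    refine ⟨V₁ ∪ V₂, ho₁.union ho₂, union_subset_union hs₁ hs₂, union_subset hu₁ hu₂, min r₁ r₂,
      lt_min hr₁ hr₂, (min_le_left _ _).trans hrr₁, max c₁ c₂, lt_max_of_lt_left hc₁, ?_⟩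
    intro n h M K hh hM hK
    obtain ⟨q₁, ha₁, hb₁⟩ := H₁ n h M K hh hM hK
    obtain ⟨q₂, ha₂, hb₂⟩ := H₂ n h M K hh hM hK
    have m₁ : tube d V₁ (min r₁ r₂) ⊆ tube d V₁ r₁ := tube_mono subset_rfl (min_le_left _ _)
    have m₂ : tube d V₂ (min r₁ r₂) ⊆ tube d V₂ r₂ := tube_mono subset_rfl (min_le_right _ _)
    have hag : ∀ v ∈ tube d V₁ (min r₁ r₂), v ∈ tube d V₂ (min r₁ r₂) → q₁ v = q₂ v := by
      intro v hv1 hv2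
      refine uniq (O := tube d V₁ (min r₁ r₂) ∩ tube d V₂ (min r₁ r₂)) ((tube_open ho₁ _).inter (tube_open ho₂ _))
        (Q := Q) ?_ (ha₁.continuousOn.mono fun x hx => m₁ hx.1) (ha₂.continuousOn.mono fun x hx => m₂ hx.2) n ?_ v ⟨hv1, hv2⟩
      · intro w hw
        exact hQ0 w (tube_mono hu₁ hrr₁ (m₁ hw.1))
      · intro w hw
        rw [← (hb₁ w (m₁ hw.1)).1, ← (hb₂ w (m₂ hw.2)).1]
    obtain ⟨q, hqa, hq1, hq2⟩ := glue (tube_open ho₁ _) (tube_open ho₂ _) (ha₁.mono m₁) (ha₂.mono m₂) hag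
    rw [tube_union]
    refine ⟨q, hqa, ?_⟩
    rintro x (hx | hx)
    · have hM0 : 0 ≤ M := (norm_nonneg _).trans (hM x (tube_mono hu₁ hrr₁ (m₁ hx)))
      rw [hq1 x hx]
      refine ⟨(hb₁ x (m₁ hx)).1, (hb₁ x (m₁ hx)).2.trans ?_⟩
      gcongr; exact le_max_left _ _
    · have hM0 : 0 ≤ M := (norm_nonneg _).trans (hM x (tube_mono hu₂ hrr₂ (m₂ hx)))
      rw [hq2 x hx]
      refine ⟨(hb₂ x (m₂ hx)).1, (hb₂ x (m₂ hx)).2.trans ?_⟩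
      gcongr; exact le_max_right _ _
  · intro t ht
    obtain ⟨ε, hε, hεU⟩ := Metric.isOpen_iff.1 hU t (hLU ht)
    have hR : 0 < min ε r := lt_min hε hr
    have hsub : Metric.ball (Function.update (0 : Fin (d+2) → ℂ) 0 t) (min ε r) ⊆ tube d U r := by
      rw [← tube_ball t hR]
      exact tube_mono ((Metric.ball_subset_ball (min_le_left _ _)).trans hεU) (min_le_right _ _)
    obtain ⟨r', hr', hrR, c, hc, H⟩ := local_div hαβ hR (hQ.mono hsub)
      (hQ0 _ (hsub (Metric.mem_ball_self hR)))
    refine ⟨Metric.ball t r', nhdsWithin_le_nhds (Metric.ball_mem_nhds t hr'), Metric.ball t r', Metric.isOpen_ball, subset_rfl,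
      ((Metric.ball_subset_ball (hrR.trans (min_le_left _ _))).trans hεU), r', hr', hrR.trans (min_le_right _ _), c, hc, ?_⟩
    intro n h M K hh hM hK
    rw [tube_ball t hr']
    exact H n h M K (hh.mono hsub) (fun x hx => hM x (hsub hx)) (fun x hx => hK x (hsub hx))

def edge (p₀ p₁ : ℝ) (z₀ w : ℂ) (q : ℂ → ℂ) (t : ℂ) : ℂ :=
  ∫ τ in p₀..p₁, w * q (z₀ + τ * w) / (z₀ + τ * w - t)

lemma log_I_mul {y : ℂ} (hy : 0 < y.re) : log (I * y) = log y + Real.pi / 2 * I := by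
  have h0 : y ≠ 0 := by rintro rfl; simp at hy
  rw [(log_mul_eq_add_log_iff I_ne_zero h0).2, log_I, add_comm]
  rw [arg_I]
  have := abs_lt.1 (abs_arg_lt_pi_div_two_iff.2 (Or.inl hy))
  constructor <;> linarith [Real.pi_pos]

lemma edge_one {p₀ p₁ : ℝ} {z₀ w t : ℂ} (u : ℂ) (hp : p₀ ≤ p₁)
    (h : ∀ τ ∈ Icc p₀ p₁, 0 < (u * (z₀ + τ * w - t)).re) :
    edge p₀ p₁ z₀ w (fun _ => 1) t = log (u * (z₀ + p₁ * w - t)) - log (u * (z₀ + p₀ * w - t)) := by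
  have hne : ∀ τ ∈ Icc p₀ p₁, u * (z₀ + τ * w - t) ≠ 0 := by
    intro τ hτ h0
    have := h τ hτ
    rw [h0] at this; simp at this
  unfold edge
  apply intervalIntegral.integral_eq_sub_of_hasDerivAt (f := fun τ : ℝ => log (u * (z₀ + τ * w - t)))
  · intro τ hτ
    rw [uIcc_of_le hp] at hτ
    have h1 : HasDerivAt (fun τ : ℝ => u * (z₀ + τ * w - t)) (u * w) τ := by
      have := (((Complex.ofRealCLM.hasDerivAt (x := τ)).mul_const w).const_add z₀).sub_const t
      have := this.const_mul u
      simpa using this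
    have h2 := h1.clog_real (Or.inl (h τ hτ))
    rw [mul_div_mul_left _ _ (left_ne_zero_of_mul (hne τ hτ))] at h2
    rw [mul_one]; exact h2
  · apply ContinuousOn.intervalIntegrable
    rw [uIcc_of_le hp]
    apply ContinuousOn.div (by fun_prop) (Continuous.continuousOn (by fun_prop))
    intro τ hτ
    exact right_ne_zero_of_mul (hne τ hτ)

lemma rect_cauchy {a b c e : ℝ} {q : ℂ → ℂ} {t : ℂ} (hat : a < t.re) (htb : t.re < b) (hct : c < t.im) (htd : t.im < e)
    (hq : DifferentiableOn ℂ q (Icc a b ×ℂ Icc c e)) :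
    edge a b (c * I) 1 q t - edge a b (e * I) 1 q t + edge c e b I q t - edge c e a I q t
      = 2 * Real.pi * I * q t := by
  have hab : a ≤ b := by linarith
  have hce : c ≤ e := by linarith
  have hone : edge a b (c * I) 1 (fun _ => 1) t - edge a b (e * I) 1 (fun _ => 1) t
      + edge c e b I (fun _ => 1) t - edge c e a I (fun _ => 1) t = 2 * Real.pi * I := by
    rw [edge_one I hab (by intro τ hτ; simp; linarith), edge_one (-I) hab (by intro τ hτ; simp; linarith),
      edge_one 1 hce (by intro τ hτ; simp; linarith), edge_one (-1) hce (by intro τ hτ; simp; linarith)]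
    have k1 := log_I_mul (y := -I * (e * I + b * 1 - t)) (by simp; linarith)
    have k2 := log_I_mul (y := -1 * (a + e * I - t)) (by simp; linarith)
    have k3 := log_I_mul (y := I * (c * I + a * 1 - t)) (by simp; linarith)
    have k4 := log_I_mul (y := 1 * (b + c * I - t)) (by simp; linarith)
    have e1 : I * (-I * (e * I + b * 1 - t)) = 1 * (b + e * I - t) := by
      linear_combination (-(e * I + b * 1 - t)) * I_sq
    have e2 : I * (-1 * (a + e * I - t)) = -I * (e * I + a * 1 - t) := by ring
    have e3 : I * (I * (c * I + a * 1 - t)) = -1 * (a + c * I - t) := by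
      linear_combination ((c * I + a * 1 - t)) * I_sq
    have e4 : I * (1 * (b + c * I - t)) = I * (c * I + b * 1 - t) := by ring
    rw [e1] at k1; rw [e2] at k2; rw [e3] at k3; rw [e4] at k4
    rw [k1, k2, k3, k4]; ring
  have hmem : Icc a b ×ℂ Icc c e ∈ nhds t := by
    refine Filter.mem_of_superset ((isOpen_Ioo (a := a) (b := b)).reProdIm (isOpen_Ioo (a := c) (b := e)) |>.mem_nhds ⟨⟨hat, htb⟩, hct, htd⟩) ?_
    intro z hz
    exact ⟨Ioo_subset_Icc_self hz.1, Ioo_subset_Icc_self hz.2⟩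
  have hds := (differentiableOn_dslope hmem).2 hq
  have h0 := integral_boundary_rect_eq_zero_of_differentiableOn (dslope q t) ⟨a, c⟩ ⟨b, e⟩ (by
    simpa [uIcc_of_le hab, uIcc_of_le hce] using hds)
  have key : ∀ (p₀ p₁ : ℝ) (z₀ w : ℂ), p₀ ≤ p₁ → (∀ τ ∈ Icc p₀ p₁, z₀ + τ * w ∈ Icc a b ×ℂ Icc c e) →
      (∀ τ ∈ Icc p₀ p₁, z₀ + τ * w - t ≠ 0) →
      w * (∫ τ in p₀..p₁, dslope q t (z₀ + τ * w)) = edge p₀ p₁ z₀ w q t - edge p₀ p₁ z₀ w (fun _ => 1) t * q t := by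
    intro p₀ p₁ z₀ w hp h1 h2
    unfold edge
    have c1 : Continuous (fun τ : ℝ => z₀ + τ * w) := by fun_prop
    have i1 : ContinuousOn (fun τ : ℝ => w * q (z₀ + τ * w) / (z₀ + τ * w - t)) (Icc p₀ p₁) := by
      refine ContinuousOn.div (continuousOn_const.mul ?_) (by fun_prop) h2
      exact hq.continuousOn.comp c1.continuousOn h1
    have i2 : ContinuousOn (fun τ : ℝ => w * 1 / (z₀ + τ * w - t) * q t) (Icc p₀ p₁) :=
      (ContinuousOn.div continuousOn_const (by fun_prop) h2).mul continuousOn_const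
    rw [← intervalIntegral.integral_mul_const, ← intervalIntegral.integral_const_mul,
      ← intervalIntegral.integral_sub (i1.mono (by rw [uIcc_of_le hp])).intervalIntegrable (i2.mono (by rw [uIcc_of_le hp])).intervalIntegrable]
    apply intervalIntegral.integral_congr
    intro τ hτ
    rw [uIcc_of_le hp] at hτ
    have h3 := h2 τ hτ
    simp only
    rw [dslope_of_ne _ (sub_ne_zero.1 h3), slope_def_field]
    field_simp
  have k1 := key a b (c * I) 1 hab (by intro τ hτ; simpa [mem_reProdIm, hce] using hτ) (by
    intro τ hτ h; have := congrArg im h; simp at this; linarith)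
  have k2 := key a b (e * I) 1 hab (by intro τ hτ; simpa [mem_reProdIm, hce] using hτ) (by
    intro τ hτ h; have := congrArg im h; simp at this; linarith)
  have k3 := key c e b I hce (by intro τ hτ; simpa [mem_reProdIm, hab] using hτ) (by
    intro τ hτ h; have := congrArg re h; simp at this; linarith)
  have k4 := key c e a I hce (by intro τ hτ; simpa [mem_reProdIm, hab] using hτ) (by
    intro τ hτ h; have := congrArg re h; simp at this; linarith)
  simp only [one_mul, mul_one] at k1 k2
  have s1 : ∀ (c : ℝ), ∫ x in a..b, dslope q t (x + c * I) = ∫ x in a..b, dslope q t (c * I + x) := by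
    intro c; simp_rw [add_comm]
  simp only [smul_eq_mul] at h0
  rw [s1, s1, k1, k2, k3, k4] at h0
  linear_combination h0 + q t * hone

lemma edge_norm {p₀ p₁ : ℝ} {z₀ w : ℂ} {q : ℂ → ℂ} {t : ℂ} {M η : ℝ} (hp : p₀ ≤ p₁) (hη : 0 < η)
    (hw : ‖w‖ = 1) (hM : ∀ τ ∈ Icc p₀ p₁, ‖q (z₀ + τ * w)‖ ≤ M)
    (hd : ∀ τ ∈ Icc p₀ p₁, η ≤ ‖z₀ + τ * w - t‖) :
    ‖edge p₀ p₁ z₀ w q t‖ ≤ M / η * (p₁ - p₀) := by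
  unfold edge
  have := intervalIntegral.norm_integral_le_of_norm_le_const (a := p₀) (b := p₁) (C := M / η)
    (f := fun τ : ℝ => w * q (z₀ + τ * w) / (z₀ + τ * w - t)) ?_
  · rwa [abs_of_nonneg (sub_nonneg.2 hp)] at this
  · intro τ hτ
    rw [uIoc_of_le hp] at hτ
    have hτ' := Ioc_subset_Icc_self hτ
    rw [norm_div, norm_mul, hw, one_mul]
    have := hM τ hτ'
    have h0 := (norm_nonneg _).trans this
    gcongr
    exact hd τ hτ'

lemma edge_analytic {d : ℕ} {V S : Set ℂ} (hS : IsOpen S) {r : ℝ} {p₀ p₁ : ℝ} {z₀ w : ℂ} (hp : p₀ ≤ p₁)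
    {q : (Fin (d+2) → ℂ) → ℂ} (hq : AnalyticOnNhd ℂ q (tube d V r))
    (hm : ∀ τ ∈ Icc p₀ p₁, z₀ + τ * w ∈ V) (hd : ∀ τ ∈ Icc p₀ p₁, ∀ t ∈ S, z₀ + τ * w - t ≠ 0) :
    AnalyticOnNhd ℂ (fun v => edge p₀ p₁ z₀ w (fun t => q (Function.update v 0 t)) (v 0)) (tube d S r) := by
  unfold edge
  apply param_int (tube_open hS r) hp
    (F := fun τ v => w * q (Function.update v 0 (z₀ + τ * w)) / (z₀ + τ * w - v 0))
  · apply ContinuousOn.div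
    · apply continuousOn_const.mul
      refine hq.continuousOn.comp (f := fun p : ℝ × (Fin (d+2) → ℂ) => Function.update p.2 0 (z₀ + p.1 * w))
        (Continuous.continuousOn ?_) ?_
      · apply Continuous.update <;> fun_prop
      · rintro ⟨τ, v⟩ ⟨h1, h2⟩
        exact tube_update h2 (hm τ h1)
    · fun_prop
    · rintro ⟨τ, v⟩ ⟨h1, h2⟩
      exact hd τ h1 _ h2.1
  · intro τ hτ v hv
    apply DifferentiableAt.differentiableWithinAt
    simp only [div_eq_mul_inv]
    apply DifferentiableAt.fun_mul
    · apply DifferentiableAt.const_mul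
      refine DifferentiableAt.comp (g := q) (f := fun v : Fin (d+2) → ℂ => Function.update v 0 (z₀ + τ * w)) v
        (hq _ (tube_update hv (hm τ hτ))).differentiableAt ?_
      rw [differentiableAt_pi]
      intro j
      by_cases hj : j = 0
      · subst hj; simp
      · simp only [Function.update_of_ne hj]; fun_prop
    · exact DifferentiableAt.fun_inv (by fun_prop) (hd τ hτ _ hv.1)

def SplitPair (d : ℕ) (V S₁ S₂ : Set ℂ) : Prop :=
  ∃ c > 0, ∀ (r : ℝ) (q : (Fin (d+2) → ℂ) → ℂ) (M : ℝ), 0 ≤ M → AnalyticOnNhd ℂ q (tube d V r) →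
    (∀ v ∈ tube d V r, ‖q v‖ ≤ M) → ∃ q₁ q₂ : (Fin (d+2) → ℂ) → ℂ,
      AnalyticOnNhd ℂ q₁ (tube d S₁ r) ∧ AnalyticOnNhd ℂ q₂ (tube d S₂ r) ∧
      (∀ v ∈ tube d S₁ r, ‖q₁ v‖ ≤ c * M) ∧ (∀ v ∈ tube d S₂ r, ‖q₂ v‖ ≤ c * M) ∧
      ∀ v ∈ tube d S₁ r, v ∈ tube d S₂ r → q v = q₁ v - q₂ v

lemma edge_ok {d : ℕ} {V S : Set ℂ} (hS : IsOpen S) {r : ℝ} {p₀ p₁ : ℝ} {z₀ w : ℂ} (hp : p₀ ≤ p₁)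
    (hw : ‖w‖ = 1) {η M : ℝ} (hη : 0 < η)
    {q : (Fin (d+2) → ℂ) → ℂ} (hq : AnalyticOnNhd ℂ q (tube d V r)) (hM : ∀ v ∈ tube d V r, ‖q v‖ ≤ M)
    (hm : ∀ τ ∈ Icc p₀ p₁, z₀ + τ * w ∈ V) (hd : ∀ τ ∈ Icc p₀ p₁, ∀ t ∈ S, η ≤ ‖z₀ + τ * w - t‖) (k : ℂ)
    (hk : ‖k‖ ≤ 1) :
    AnalyticOnNhd ℂ (fun v => k * edge p₀ p₁ z₀ w (fun t => q (Function.update v 0 t)) (v 0)) (tube d S r) ∧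
    ∀ v ∈ tube d S r, ‖k * edge p₀ p₁ z₀ w (fun t => q (Function.update v 0 t)) (v 0)‖ ≤ (p₁ - p₀) / η * M := by
  constructor
  · intro v hv
    refine analyticAt_const.fun_mul (edge_analytic hS hp hq hm ?_ v hv)
    intro τ hτ t ht h0
    have := hd τ hτ t ht
    rw [h0, norm_zero] at this; linarith
  · intro v hv
    have h1 := edge_norm (q := fun t => q (Function.update v 0 t)) (t := v 0) (M := M) hp hη hw
      (fun τ hτ => hM _ (tube_update hv (hm τ hτ))) (fun τ hτ => hd τ hτ _ hv.1)
    rw [norm_mul]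
    calc _ ≤ 1 * (M / η * (p₁ - p₀)) := by gcongr
      _ = _ := by ring

lemma norm_k : ‖(2 * Real.pi * I : ℂ)⁻¹‖ ≤ 1 := by
  rw [norm_inv]
  apply inv_le_one_of_one_le₀
  have : ‖(2 * Real.pi * I : ℂ)‖ = 2 * Real.pi := by simp [abs_of_pos Real.pi_pos]
  rw [this]; linarith [Real.pi_gt_three]

lemma rect_split {d : ℕ} {V : Set ℂ} {a b c e η : ℝ} (hab : a ≤ b) (hce : c ≤ e) (hη : 0 < η)
    (hV : Icc a b ×ℂ Icc c e ⊆ V) {r : ℝ} {q : (Fin (d+2) → ℂ) → ℂ} {M : ℝ} 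
    (hq : AnalyticOnNhd ℂ q (tube d V r)) (hM : ∀ v ∈ tube d V r, ‖q v‖ ≤ M) :
    ∃ qB qT qR qL : (Fin (d+2) → ℂ) → ℂ,
      (AnalyticOnNhd ℂ qB (tube d {t | c + η < t.im} r) ∧ ∀ v ∈ tube d {t | c + η < t.im} r, ‖qB v‖ ≤ (b - a) / η * M) ∧
      (AnalyticOnNhd ℂ qT (tube d {t | t.im < e - η} r) ∧ ∀ v ∈ tube d {t | t.im < e - η} r, ‖qT v‖ ≤ (b - a) / η * M) ∧
      (AnalyticOnNhd ℂ qR (tube d {t | t.re < b - η} r) ∧ ∀ v ∈ tube d {t | t.re < b - η} r, ‖qR v‖ ≤ (e - c) / η * M) ∧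
      (AnalyticOnNhd ℂ qL (tube d {t | a + η < t.re} r) ∧ ∀ v ∈ tube d {t | a + η < t.re} r, ‖qL v‖ ≤ (e - c) / η * M) ∧
      ∀ v ∈ tube d {t | a + η < t.re ∧ t.re < b - η ∧ c + η < t.im ∧ t.im < e - η} r,
        q v = qB v + qT v + qR v + qL v := by
  let k : ℂ := (2 * Real.pi * I)⁻¹
  have hk : ‖k‖ ≤ 1 := norm_k
  have hk' : ‖-k‖ ≤ 1 := by rw [norm_neg]; exact hk
  have him : ∀ z w : ℂ, |z.im - w.im| ≤ ‖z - w‖ := fun z w => by rw [← sub_im]; exact abs_im_le_norm _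
  have hre : ∀ z w : ℂ, |z.re - w.re| ≤ ‖z - w‖ := fun z w => by rw [← sub_re]; exact abs_re_le_norm _
  refine ⟨_, _, _, _,
    edge_ok (S := {t | c + η < t.im}) (z₀ := c * I) (w := 1) (isOpen_lt continuous_const continuous_im) hab (by simp) hη hq hM ?_ ?_ k hk,
    edge_ok (S := {t | t.im < e - η}) (z₀ := e * I) (w := 1) (isOpen_lt continuous_im continuous_const) hab (by simp) hη hq hM ?_ ?_ (-k) hk',
    edge_ok (S := {t | t.re < b - η}) (z₀ := b) (w := I) (isOpen_lt continuous_re continuous_const) hce (by simp) hη hq hM ?_ ?_ k hk,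
    edge_ok (S := {t | a + η < t.re}) (z₀ := a) (w := I) (isOpen_lt continuous_const continuous_re) hce (by simp) hη hq hM ?_ ?_ (-k) hk', ?_⟩
  · intro τ hτ; apply hV; simpa [mem_reProdIm, hce] using hτ
  · intro τ hτ t ht
    refine le_trans ?_ (him _ _)
    rw [abs_sub_comm]; refine le_trans ?_ (le_abs_self _)
    simp at ht ⊢; linarith
  · intro τ hτ; apply hV; simpa [mem_reProdIm, hce] using hτ
  · intro τ hτ t ht
    refine le_trans ?_ (him _ _)
    refine le_trans ?_ (le_abs_self _)
    simp at ht ⊢; linarith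
  · intro τ hτ; apply hV; simpa [mem_reProdIm, hab] using hτ
  · intro τ hτ t ht
    refine le_trans ?_ (hre _ _)
    refine le_trans ?_ (le_abs_self _)
    simp at ht ⊢; linarith
  · intro τ hτ; apply hV; simpa [mem_reProdIm, hab] using hτ
  · intro τ hτ t ht
    refine le_trans ?_ (hre _ _)
    rw [abs_sub_comm]; refine le_trans ?_ (le_abs_self _)
    simp at ht ⊢; linarith
  · intro v hv
    obtain ⟨h1, h2, h3, h4⟩ := hv.1
    have := rect_cauchy (q := fun t => q (Function.update v 0 t)) (t := v 0) (a := a) (b := b) (c := c) (e := e) (by linarith)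
      (by linarith) (by linarith) (by linarith) ?_
    · rw [Function.update_eq_self] at this
      have h5 : q v = k * (2 * Real.pi * I * q v) := by
        simp only [k]; rw [inv_mul_cancel_left₀ two_pi_I_ne_zero]
      rw [h5, ← this]; ring
    · intro t ht
      apply DifferentiableAt.differentiableWithinAt
      exact DifferentiableAt.comp (g := q) (f := fun t => Function.update v 0 t) t
        (hq _ (tube_update hv (hV ht))).differentiableAt (hasFDerivAt_update v t).differentiableAt

lemma splitH {d : ℕ} {V : Set ℂ} {a b c e η : ℝ} (hab : a < b) (hce : c ≤ e) (hη : 0 < η)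
    (hV : Icc a b ×ℂ Icc c e ⊆ V) : SplitPair d V {t | t.re < b - η ∧ c + η < t.im ∧ t.im < e - η}
      {t | a + η < t.re ∧ c + η < t.im ∧ t.im < e - η} := by
  refine ⟨2 * (b - a) / η + (e - c) / η, ?_, ?_⟩
  · have := sub_pos.2 hab
    have := sub_nonneg.2 hce
    positivity
  intro r q M hM0 hq hM
  obtain ⟨qB, qT, qR, qL, ⟨aB, bB⟩, ⟨aT, bT⟩, ⟨aR, bR⟩, ⟨aL, bL⟩, H⟩ := rect_split hab.le hce hη hV hq hM
  refine ⟨fun v => qB v + qT v + qR v, fun v => - qL v, ?_, ?_, ?_, ?_, ?_⟩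
  · intro v hv
    exact ((aB v ⟨hv.1.2.1, hv.2⟩).fun_add (aT v ⟨hv.1.2.2, hv.2⟩)).fun_add (aR v ⟨hv.1.1, hv.2⟩)
  · intro v hv
    exact (aL v ⟨hv.1.1, hv.2⟩).fun_neg
  · intro v hv
    have h1 := bB v ⟨hv.1.2.1, hv.2⟩
    have h2 := bT v ⟨hv.1.2.2, hv.2⟩
    have h3 := bR v ⟨hv.1.1, hv.2⟩
    calc _ ≤ ‖qB v‖ + ‖qT v‖ + ‖qR v‖ := norm_add₃_le
      _ ≤ (b - a) / η * M + (b - a) / η * M + (e - c) / η * M := by gcongr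
      _ = _ := by ring
  · intro v hv
    have h3 := bL v ⟨hv.1.1, hv.2⟩
    rw [norm_neg]
    refine h3.trans ?_
    have := sub_pos.2 hab
    gcongr
    exact le_add_of_nonneg_left (by positivity)
  · intro v hv hv'
    rw [H v ⟨⟨hv'.1.1, hv.1⟩, hv.2⟩]; ring

lemma splitV {d : ℕ} {V : Set ℂ} {a b c e η : ℝ} (hab : a ≤ b) (hce : c < e) (hη : 0 < η)
    (hV : Icc a b ×ℂ Icc c e ⊆ V) : SplitPair d V {t | t.im < e - η ∧ a + η < t.re ∧ t.re < b - η}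
      {t | c + η < t.im ∧ a + η < t.re ∧ t.re < b - η} := by
  refine ⟨(b - a) / η + 2 * (e - c) / η, ?_, ?_⟩
  · have := sub_pos.2 hce
    have := sub_nonneg.2 hab
    positivity
  intro r q M hM0 hq hM
  obtain ⟨qB, qT, qR, qL, ⟨aB, bB⟩, ⟨aT, bT⟩, ⟨aR, bR⟩, ⟨aL, bL⟩, H⟩ := rect_split hab hce.le hη hV hq hM
  refine ⟨fun v => qT v + qR v + qL v, fun v => - qB v, ?_, ?_, ?_, ?_, ?_⟩
  · intro v hv
    exact ((aT v ⟨hv.1.1, hv.2⟩).fun_add (aR v ⟨hv.1.2.2, hv.2⟩)).fun_add (aL v ⟨hv.1.2.1, hv.2⟩)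
  · intro v hv
    exact (aB v ⟨hv.1.1, hv.2⟩).fun_neg
  · intro v hv
    have h1 := bT v ⟨hv.1.1, hv.2⟩
    have h2 := bR v ⟨hv.1.2.2, hv.2⟩
    have h3 := bL v ⟨hv.1.2.1, hv.2⟩
    calc _ ≤ ‖qT v‖ + ‖qR v‖ + ‖qL v‖ := norm_add₃_le
      _ ≤ (b - a) / η * M + (e - c) / η * M + (e - c) / η * M := by gcongr
      _ = _ := by ring
  · intro v hv
    have h3 := bB v ⟨hv.1.1, hv.2⟩
    rw [norm_neg]
    refine h3.trans ?_
    have := sub_pos.2 hce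
    gcongr
    exact le_add_of_nonneg_right (by positivity)
  · intro v hv hv'
    rw [H v ⟨⟨hv.1.2.1, hv.1.2.2, hv'.1.1, hv.1.1⟩, hv.2⟩]; ring

/-- family of approximants with index-dependent constants `γ` -/
def Fam {N : ℕ} (γ : ℕ → ℝ) (Q F : (Fin N → ℂ) → ℂ) (Sg D : Set (Fin N → ℂ)) (g : ℕ → (Fin N → ℂ) → ℂ)
    (C A : ℝ) : Prop :=
  (∀ n, AnalyticOnNhd ℂ (g n) D) ∧ (∀ n, ∀ v ∈ D, ‖g n v‖ ≤ C * A ^ n * γ n) ∧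
    (∀ n, ∀ v ∈ D, v ∈ Sg → ‖F v - g n v‖ ≤ C * A ^ n * γ n * ‖Q v‖ ^ n)

lemma cst_mono {C C' A A' γ : ℝ} (n : ℕ) (hγ : 0 < γ) (hC : 0 < C) (hA : 0 < A) (hCC : C ≤ C') (hAA : A ≤ A') :
    C * A ^ n * γ ≤ C' * A' ^ n * γ := by
  gcongr; linarith

lemma Fam.mono {N : ℕ} {γ : ℕ → ℝ} {Q F : (Fin N → ℂ) → ℂ} {Sg D D' : Set (Fin N → ℂ)} {g : ℕ → (Fin N → ℂ) → ℂ}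
    {C A C' A' : ℝ} (h : Fam γ Q F Sg D g C A) (hγ : ∀ n, 0 < γ n) (hC : 0 < C) (hA : 0 < A)
    (hCC : C ≤ C') (hAA : A ≤ A') (hD : D' ⊆ D) : Fam γ Q F Sg D' g C' A' := by
  refine ⟨fun n => (h.1 n).mono hD, fun n v hv => (h.2.1 n v (hD hv)).trans (cst_mono n (hγ n) hC hA hCC hAA), fun n v hv hs => (h.2.2 n v (hD hv) hs).trans ?_⟩
  have := cst_mono n (hγ n) hC hA hCC hAA
  gcongr

/-- the hypotheses on `Q` and the sector. -/
structure Ctx (d : ℕ) (α β B : ℝ) (Q : (Fin (d+2) → ℂ) → ℂ) (Sg Ω : Set (Fin (d+2) → ℂ)) : Prop where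
  hαβ : α < β
  hΩ : IsOpen Ω
  hB0 : 0 ≤ B
  hB : ∀ v ∈ Ω, ‖Q v‖ ≤ B
  hQ : AnalyticOnNhd ℂ Q Ω
  hQ0 : ∀ v ∈ Ω, ¬ ∀ᶠ x in nhds v, Q x = 0
  hS : ∀ v ∈ Ω, (∀ j, v j ≠ 0) → inSec α β (Q v) → v ∈ Sg

lemma fam_div {d : ℕ} {α β B : ℝ} {Q F : (Fin (d+2) → ℂ) → ℂ} {Sg Ω : Set (Fin (d+2) → ℂ)}
    (X : Ctx d α β B Q Sg Ω) {γ : ℕ → ℝ} {U : Set ℂ} (hU : IsOpen U)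
    {r : ℝ} (hr : 0 < r) (hUO : tube d U r ⊆ Ω) {g₁ g₂ : ℕ → (Fin (d+2) → ℂ) → ℂ} {C A : ℝ} (hA : 0 < A)
    (h₁ : Fam γ Q F Sg (tube d U r) g₁ C A) (h₂ : Fam γ Q F Sg (tube d U r) g₂ C A)
    {L : Set ℂ} (hL : IsCompact L) (hLU : L ⊆ U) :
    ∃ V : Set ℂ, IsOpen V ∧ L ⊆ V ∧ V ⊆ U ∧ ∃ r' > 0, r' ≤ r ∧ ∃ A' > 0, ∃ q : ℕ → (Fin (d+2) → ℂ) → ℂ,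
      (∀ n, AnalyticOnNhd ℂ (q n) (tube d V r')) ∧
      ∀ n, ∀ x ∈ tube d V r', g₁ n x - g₂ n x = Q x ^ n * q n x ∧ ‖q n x‖ ≤ 2 * C * A' ^ n * γ n := by
  obtain ⟨V, hV, hLV, hVU, r', hr', hrr, c, hc, H⟩ := compact_div X.hαβ hU hr (X.hQ.mono hUO)
    (fun v hv => X.hQ0 v (hUO hv)) hL hLU
  refine ⟨V, hV, hLV, hVU, r', hr', hrr, A * c, by positivity, ?_⟩
  have : ∀ n, ∃ q : (Fin (d+2) → ℂ) → ℂ, AnalyticOnNhd ℂ q (tube d V r') ∧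
          ∀ x ∈ tube d V r', g₁ n x - g₂ n x = Q x ^ n * q x ∧ ‖q x‖ ≤ 2 * C * (A * c) ^ n * γ n := by
    intro n
    have hh : AnalyticOnNhd ℂ (fun x => g₁ n x - g₂ n x) (tube d U r) :=
      fun x hx => (h₁.1 n x hx).fun_sub (h₂.1 n x hx)
    have hb1 : ∀ x ∈ tube d U r, ‖g₁ n x - g₂ n x‖ ≤ 2 * (C * A ^ n * γ n) := by
      intro x hx
      refine (norm_sub_le _ _).trans ?_
      linarith [h₁.2.1 n x hx, h₂.2.1 n x hx]
    have hb2 := sec_ext (α := α) (β := β) (K := 2 * (C * A ^ n * γ n)) (m := n) (tube_open hU r) hh.continuousOn (X.hQ.continuousOn.mono hUO) (by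
      intro v hv hnz hs
      have hS := X.hS v (hUO hv) hnz hs
      have e : g₁ n v - g₂ n v = (F v - g₂ n v) - (F v - g₁ n v) := by ring
      rw [e]
      refine (norm_sub_le _ _).trans ?_
      linarith [h₁.2.2 n v hv hS, h₂.2.2 n v hv hS])
    obtain ⟨q, hqa, hq⟩ := H n (fun x => g₁ n x - g₂ n x) (2 * (C * A ^ n * γ n)) (2 * (C * A ^ n * γ n)) hh hb1 hb2
    refine ⟨q, hqa, fun x hx => ⟨(hq x hx).1, (hq x hx).2.trans (le_of_eq ?_)⟩⟩
    rw [mul_pow]; ring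
  choose q hq1 hq2 using this
  exact ⟨q, hq1, hq2⟩

lemma corr_arith {C A C₂ A₂ B γ : ℝ} (n : ℕ) (hγ : 0 < γ) (hC : 0 < C) (hA : 0 < A) (hC₂ : 0 < C₂) (hA₂ : 0 < A₂)
    (hB : 0 ≤ B) : C * A ^ n * γ + C₂ * A₂ ^ n * γ ≤ (C + C₂) * (A + A₂ + B * A₂) ^ n * γ ∧
      C * A ^ n * γ + B ^ n * (C₂ * A₂ ^ n * γ) ≤ (C + C₂) * (A + A₂ + B * A₂) ^ n * γ := by
  have hBA : 0 ≤ B * A₂ := by positivity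
  have e1 : A ^ n ≤ (A + A₂ + B * A₂) ^ n := by gcongr; linarith
  have e2 : A₂ ^ n ≤ (A + A₂ + B * A₂) ^ n := by gcongr; linarith
  have e3 : (B * A₂) ^ n ≤ (A + A₂ + B * A₂) ^ n := by gcongr; linarith
  constructor
  · calc _ ≤ C * (A + A₂ + B * A₂) ^ n * γ + C₂ * (A + A₂ + B * A₂) ^ n * γ := by gcongr
      _ = _ := by ring
  · calc _ = C * A ^ n * γ + C₂ * (B * A₂) ^ n * γ := by rw [mul_pow]; ring
      _ ≤ C * (A + A₂ + B * A₂) ^ n * γ + C₂ * (A + A₂ + B * A₂) ^ n * γ := by gcongr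
      _ = _ := by ring

lemma fam_corr {N : ℕ} {γ : ℕ → ℝ} {Q F : (Fin N → ℂ) → ℂ} {Sg D : Set (Fin N → ℂ)} {g q : ℕ → (Fin N → ℂ) → ℂ}
    {C A C₂ A₂ B : ℝ} (h : Fam γ Q F Sg D g C A) (hγ : ∀ n, 0 < γ n) (hC : 0 < C) (hA : 0 < A) (hC₂ : 0 < C₂) (hA₂ : 0 < A₂)
    (hB0 : 0 ≤ B) (hB : ∀ v ∈ D, ‖Q v‖ ≤ B) (hQ : AnalyticOnNhd ℂ Q D) (hq : ∀ n, AnalyticOnNhd ℂ (q n) D)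
    (hqb : ∀ n, ∀ v ∈ D, ‖q n v‖ ≤ C₂ * A₂ ^ n * γ n) :
    Fam γ Q F Sg D (fun n v => g n v - Q v ^ n * q n v) (C + C₂) (A + A₂ + B * A₂) := by
  refine ⟨?_, ?_, ?_⟩
  · intro n v hv
    exact (h.1 n v hv).fun_sub (((hQ v hv).fun_pow n).fun_mul (hq n v hv))
  · intro n v hv
    refine (norm_sub_le _ _).trans (le_trans ?_ (corr_arith n (hγ n) hC hA hC₂ hA₂ hB0).2)
    rw [norm_mul, norm_pow]
    have := hB v hv
    have h1 := h.2.1 n v hv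
    have h2 := hqb n v hv
    gcongr
  · intro n v hv hs
    have e : F v - (g n v - Q v ^ n * q n v) = (F v - g n v) + Q v ^ n * q n v := by ring
    rw [e]
    have h1 := h.2.2 n v hv hs
    have h2 := hqb n v hv
    calc _ ≤ ‖F v - g n v‖ + ‖Q v‖ ^ n * ‖q n v‖ := by
          refine (norm_add_le _ _).trans ?_
          rw [norm_mul, norm_pow]
      _ ≤ C * A ^ n * γ n * ‖Q v‖ ^ n + ‖Q v‖ ^ n * (C₂ * A₂ ^ n * γ n) := by gcongr
      _ = (C * A ^ n * γ n + C₂ * A₂ ^ n * γ n) * ‖Q v‖ ^ n := by ring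
      _ ≤ _ := by
        have := (corr_arith n (hγ n) hC hA hC₂ hA₂ hB0).1
        gcongr

lemma fam_union {N : ℕ} {γ : ℕ → ℝ} {Q F : (Fin N → ℂ) → ℂ} {Sg D₁ D₂ : Set (Fin N → ℂ)} {g₁ g₂ : ℕ → (Fin N → ℂ) → ℂ}
    {C A : ℝ} (h₁ : Fam γ Q F Sg D₁ g₁ C A) (h₂ : Fam γ Q F Sg D₂ g₂ C A) (o₁ : IsOpen D₁) (o₂ : IsOpen D₂)
    (he : ∀ n, ∀ v ∈ D₁, v ∈ D₂ → g₁ n v = g₂ n v) :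
    ∃ g, Fam γ Q F Sg (D₁ ∪ D₂) g C A := by
  choose g hg1 hg2 hg3 using fun n => glue o₁ o₂ (h₁.1 n) (h₂.1 n) (he n)
  refine ⟨g, hg1, ?_, ?_⟩
  · rintro n v (hv | hv)
    · rw [hg2 n v hv]; exact h₁.2.1 n v hv
    · rw [hg3 n v hv]; exact h₂.2.1 n v hv
  · rintro n v (hv | hv) hs
    · rw [hg2 n v hv]; exact h₁.2.2 n v hv hs
    · rw [hg3 n v hv]; exact h₂.2.2 n v hv hs

def Good (d : ℕ) (γ : ℕ → ℝ) (Q F : (Fin (d+2) → ℂ) → ℂ) (Sg Ω : Set (Fin (d+2) → ℂ)) (K : Set ℂ) : Prop :=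
  ∃ U : Set ℂ, IsOpen U ∧ K ⊆ U ∧ ∃ r > 0, tube d U r ⊆ Ω ∧ ∃ g, ∃ C > 0, ∃ A > 0,
    Fam γ Q F Sg (tube d U r) g C A

lemma Good.mono {d : ℕ} {γ : ℕ → ℝ} {Q F : (Fin (d+2) → ℂ) → ℂ} {Sg Ω : Set (Fin (d+2) → ℂ)} {K K' : Set ℂ}
    (h : Good d γ Q F Sg Ω K) (hK : K' ⊆ K) : Good d γ Q F Sg Ω K' := by
  obtain ⟨U, h1, h2, h3⟩ := h
  exact ⟨U, h1, hK.trans h2, h3⟩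

lemma merge {d : ℕ} {α β B : ℝ} {γ : ℕ → ℝ} {Q F : (Fin (d+2) → ℂ) → ℂ} {Sg Ω : Set (Fin (d+2) → ℂ)}
    (X : Ctx d α β B Q Sg Ω) (hγ : ∀ n, 0 < γ n) {K₁ K₂ : Set ℂ} (hK : IsCompact (K₁ ∩ K₂))
    (hs : ∀ V : Set ℂ, IsOpen V → K₁ ∩ K₂ ⊆ V → ∃ S₁ S₂ : Set ℂ, IsOpen S₁ ∧ IsOpen S₂ ∧ K₁ ⊆ S₁ ∧ K₂ ⊆ S₂ ∧
      S₁ ∩ S₂ ⊆ V ∧ SplitPair d V S₁ S₂)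
    (G₁ : Good d γ Q F Sg Ω K₁) (G₂ : Good d γ Q F Sg Ω K₂) : Good d γ Q F Sg Ω (K₁ ∪ K₂) := by
  obtain ⟨U₁, oU₁, hK₁, r₁, hr₁, hO₁, g₁, C₁, hC₁, A₁, hA₁, F₁⟩ := G₁
  obtain ⟨U₂, oU₂, hK₂, r₂, hr₂, hO₂, g₂, C₂, hC₂, A₂, hA₂, F₂⟩ := G₂
  have hC : 0 < max C₁ C₂ := lt_max_of_lt_left hC₁
  have hA : 0 < max A₁ A₂ := lt_max_of_lt_left hA₁
  have hr : 0 < min r₁ r₂ := lt_min hr₁ hr₂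
  have F₁' := F₁.mono hγ hC₁ hA₁ (le_max_left C₁ C₂) (le_max_left A₁ A₂) (tube_mono subset_rfl (min_le_left r₁ r₂))
  have F₂' := F₂.mono hγ hC₂ hA₂ (le_max_right C₁ C₂) (le_max_right A₁ A₂) (tube_mono subset_rfl (min_le_right r₁ r₂))
  obtain ⟨V, oV, hLV, hVU, r', hr', hrr, A', hA', q, hq, hqe⟩ := fam_div X (oU₁.inter oU₂) hr
    ((tube_mono inter_subset_left (min_le_left _ _)).trans hO₁) hA
    (F₁'.mono hγ hC hA le_rfl le_rfl (tube_mono inter_subset_left le_rfl))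
    (F₂'.mono hγ hC hA le_rfl le_rfl (tube_mono inter_subset_right le_rfl)) hK
    (inter_subset_inter hK₁ hK₂)
  obtain ⟨S₁, S₂, oS₁, oS₂, hKS₁, hKS₂, hSV, c, hc, hsp⟩ := hs V oV hLV
  set C := max C₁ C₂
  set A := max A₁ A₂
  have h0 : ∀ n, 0 ≤ 2 * C * A' ^ n * γ n := fun n => by have := hγ n; positivity
  choose q₁ q₂ hq₁ hq₂ hb₁ hb₂ hqq using fun n => hsp r' (q n) _ (h0 n) (hq n) (fun v hv => (hqe n v hv).2)
  have m₁ : tube d (U₁ ∩ S₁) r' ⊆ tube d U₁ (min r₁ r₂) := tube_mono inter_subset_left hrr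
  have m₂ : tube d (U₂ ∩ S₂) r' ⊆ tube d U₂ (min r₁ r₂) := tube_mono inter_subset_left hrr
  have O₁ : tube d (U₁ ∩ S₁) r' ⊆ Ω := m₁.trans ((tube_mono subset_rfl (min_le_left _ _)).trans hO₁)
  have O₂ : tube d (U₂ ∩ S₂) r' ⊆ Ω := m₂.trans ((tube_mono subset_rfl (min_le_right _ _)).trans hO₂)
  have n₁ : tube d (U₁ ∩ S₁) r' ⊆ tube d S₁ r' := tube_mono inter_subset_right le_rfl
  have n₂ : tube d (U₂ ∩ S₂) r' ⊆ tube d S₂ r' := tube_mono inter_subset_right le_rfl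
  have R₁ := fam_corr (C₂ := c * (2 * C)) (A₂ := A') (B := B) (F₁'.mono hγ hC hA le_rfl le_rfl m₁) hγ hC hA (by positivity) hA' X.hB0
    (fun v hv => X.hB v (O₁ hv)) (X.hQ.mono O₁) (fun n => (hq₁ n).mono n₁) (fun n v hv => (hb₁ n v (n₁ hv)).trans (le_of_eq (by ring)))
  have R₂ := fam_corr (C₂ := c * (2 * C)) (A₂ := A') (B := B) (F₂'.mono hγ hC hA le_rfl le_rfl m₂) hγ hC hA (by positivity) hA' X.hB0
    (fun v hv => X.hB v (O₂ hv)) (X.hQ.mono O₂) (fun n => (hq₂ n).mono n₂) (fun n v hv => (hb₂ n v (n₂ hv)).trans (le_of_eq (by ring)))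
  obtain ⟨g, hg⟩ := fam_union R₁ R₂ (tube_open (oU₁.inter oS₁) _) (tube_open (oU₂.inter oS₂) _) (by
    intro n v hv1 hv2
    have e1 := hqq n v (n₁ hv1) (n₂ hv2)
    have e2 := (hqe n v ⟨hSV ⟨hv1.1.2, hv2.1.2⟩, hv1.2⟩).1
    rw [e1] at e2
    linear_combination e2)
  refine ⟨(U₁ ∩ S₁) ∪ (U₂ ∩ S₂), (oU₁.inter oS₁).union (oU₂.inter oS₂), ?_, r', hr', ?_, g, C + c * (2 * C), by positivity,
    A + A' + B * A', ?_, ?_⟩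
  · exact union_subset_union (subset_inter hK₁ hKS₁) (subset_inter hK₂ hKS₂)
  · rw [tube_union]; exact union_subset O₁ O₂
  · have := X.hB0
    positivity
  · rw [tube_union]; exact hg

lemma rect_thick {a b c e : ℝ} {V : Set ℂ} (hV : IsOpen V) (hab : a ≤ b) (hce : c ≤ e) (h : Icc a b ×ℂ Icc c e ⊆ V) :
    ∃ δ > 0, Icc (a - 2 * δ) (b + 2 * δ) ×ℂ Icc (c - 2 * δ) (e + 2 * δ) ⊆ V := by
  obtain ⟨δ, hδ, hs⟩ := (isCompact_Icc.reProdIm isCompact_Icc : IsCompact (Icc a b ×ℂ Icc c e)).exists_cthickening_subset_open hV h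
  refine ⟨δ / 4, by positivity, fun z hz => hs ?_⟩
  obtain ⟨⟨h1, h2⟩, h3, h4⟩ := hz
  refine Metric.mem_cthickening_of_dist_le z ⟨max a (min z.re b), max c (min z.im e)⟩ _ _ ⟨⟨le_max_left _ _, max_le hab (min_le_right _ _)⟩, ⟨le_max_left _ _, max_le hce (min_le_right _ _)⟩⟩ ?_
  rw [dist_eq]
  refine (norm_le_abs_re_add_abs_im _).trans ?_
  simp only [sub_re, sub_im]
  have e1 : |z.re - max a (min z.re b)| ≤ δ / 2 := by
    rw [abs_le]
    constructor <;> rcases max_cases a (min z.re b) with h | h <;> rcases min_cases z.re b with h' | h' <;> linarith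
  have e2 : |z.im - max c (min z.im e)| ≤ δ / 2 := by
    rw [abs_le]
    constructor <;> rcases max_cases c (min z.im e) with h | h <;> rcases min_cases z.im e with h' | h' <;> linarith
  linarith

lemma mergeH {d : ℕ} {α β B : ℝ} {γ : ℕ → ℝ} {Q F : (Fin (d+2) → ℂ) → ℂ} {Sg Ω : Set (Fin (d+2) → ℂ)}
    (X : Ctx d α β B Q Sg Ω) (hγ : ∀ n, 0 < γ n) {a b f c e : ℝ} (hab : a ≤ b) (hbf : b ≤ f) (hce : c ≤ e)
    (G₁ : Good d γ Q F Sg Ω (Icc a b ×ℂ Icc c e)) (G₂ : Good d γ Q F Sg Ω (Icc b f ×ℂ Icc c e)) :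
    Good d γ Q F Sg Ω (Icc a f ×ℂ Icc c e) := by
  have hI : (Icc a b ×ℂ Icc c e) ∩ (Icc b f ×ℂ Icc c e) = Icc b b ×ℂ Icc c e := by
    ext z; simp only [mem_inter_iff, mem_reProdIm, mem_Icc]
    constructor
    · rintro ⟨⟨⟨_, h1⟩, h2⟩, ⟨h3, _⟩, _⟩; exact ⟨⟨h3, h1⟩, h2⟩
    · rintro ⟨⟨h1, h2⟩, h3⟩; exact ⟨⟨⟨by linarith, h2⟩, h3⟩, ⟨h1, by linarith⟩, h3⟩
  refine (merge X hγ ?_ ?_ G₁ G₂).mono ?_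
  · rw [hI]; exact isCompact_Icc.reProdIm isCompact_Icc
  · intro V oV hV
    rw [hI] at hV
    obtain ⟨δ, hδ, hs⟩ := rect_thick oV le_rfl hce hV
    have oH : IsOpen {t : ℂ | c - 2 * δ + δ < t.im ∧ t.im < e + 2 * δ - δ} :=
      (isOpen_lt continuous_const continuous_im).inter (isOpen_lt continuous_im continuous_const)
    refine ⟨_, _, ?_, ?_, ?_, ?_, ?_, splitH (by linarith) (by linarith) hδ hs⟩
    · exact (isOpen_lt continuous_re continuous_const).inter oH
    · exact (isOpen_lt continuous_const continuous_re).inter oH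
    · rintro z ⟨⟨h1, h2⟩, h3, h4⟩
      refine ⟨?_, ?_, ?_⟩ <;> linarith
    · rintro z ⟨⟨h1, h2⟩, h3, h4⟩
      refine ⟨?_, ?_, ?_⟩ <;> linarith
    · rintro z ⟨⟨h1, h2, h3⟩, h4, h5, h6⟩
      apply hs
      refine ⟨⟨?_, ?_⟩, ?_, ?_⟩ <;> linarith
  · rintro z ⟨⟨h1, h2⟩, h3⟩
    rcases le_total z.re b with h | h
    · exact Or.inl ⟨⟨h1, h⟩, h3⟩
    · exact Or.inr ⟨⟨h, h2⟩, h3⟩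

lemma mergeV {d : ℕ} {α β B : ℝ} {γ : ℕ → ℝ} {Q F : (Fin (d+2) → ℂ) → ℂ} {Sg Ω : Set (Fin (d+2) → ℂ)}
    (X : Ctx d α β B Q Sg Ω) (hγ : ∀ n, 0 < γ n) {a b f c e : ℝ} (hab : a ≤ b) (hbf : b ≤ f) (hce : c ≤ e)
    (G₁ : Good d γ Q F Sg Ω (Icc c e ×ℂ Icc a b)) (G₂ : Good d γ Q F Sg Ω (Icc c e ×ℂ Icc b f)) :
    Good d γ Q F Sg Ω (Icc c e ×ℂ Icc a f) := by
  have hI : (Icc c e ×ℂ Icc a b) ∩ (Icc c e ×ℂ Icc b f) = Icc c e ×ℂ Icc b b := by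
    ext z; simp only [mem_inter_iff, mem_reProdIm, mem_Icc]
    constructor
    · rintro ⟨⟨h2, ⟨_, h1⟩⟩, _, ⟨h3, _⟩⟩; exact ⟨h2, ⟨h3, h1⟩⟩
    · rintro ⟨h3, ⟨h1, h2⟩⟩; exact ⟨⟨h3, ⟨by linarith, h2⟩⟩, h3, ⟨h1, by linarith⟩⟩
  refine (merge X hγ ?_ ?_ G₁ G₂).mono ?_
  · rw [hI]; exact isCompact_Icc.reProdIm isCompact_Icc
  · intro V oV hV
    rw [hI] at hV
    obtain ⟨δ, hδ, hs⟩ := rect_thick oV hce le_rfl hV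
    have oH : IsOpen {t : ℂ | c - 2 * δ + δ < t.re ∧ t.re < e + 2 * δ - δ} :=
      (isOpen_lt continuous_const continuous_re).inter (isOpen_lt continuous_re continuous_const)
    refine ⟨_, _, ?_, ?_, ?_, ?_, ?_, splitV (by linarith) (by linarith) hδ hs⟩
    · exact (isOpen_lt continuous_im continuous_const).inter oH
    · exact (isOpen_lt continuous_const continuous_im).inter oH
    · rintro z ⟨⟨h1, h2⟩, h3, h4⟩
      refine ⟨?_, ?_, ?_⟩ <;> linarith
    · rintro z ⟨⟨h1, h2⟩, h3, h4⟩
      refine ⟨?_, ?_, ?_⟩ <;> linarith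
    · rintro z ⟨⟨h1, h2, h3⟩, h4, h5, h6⟩
      apply hs
      refine ⟨⟨?_, ?_⟩, ?_, ?_⟩ <;> linarith
  · rintro z ⟨h3, ⟨h1, h2⟩⟩
    rcases le_total z.im b with h | h
    · exact Or.inl ⟨h3, ⟨h1, h⟩⟩
    · exact Or.inr ⟨h3, ⟨h, h2⟩⟩

lemma interval_ind (p : ℝ → ℝ → Prop) (mono : ∀ a b a' b', a ≤ a' → a' ≤ b' → b' ≤ b → p a b → p a' b')
    (add : ∀ a b c, a ≤ b → b ≤ c → p a b → p b c → p a c) (loc : ∀ x, ∃ ε > 0, p (x - ε) (x + ε))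
    (a b : ℝ) (hab : a ≤ b) : p a b := by
  let S := {x | x ∈ Icc a b ∧ p a x}
  have haS : a ∈ S := by
    obtain ⟨ε, hε, h⟩ := loc a
    exact ⟨⟨le_rfl, hab⟩, mono _ _ a a (by linarith) le_rfl (by linarith) h⟩
  have hbd : BddAbove S := ⟨b, fun x hx => hx.1.2⟩
  have hs1 : a ≤ sSup S := le_csSup hbd haS
  have hs2 : sSup S ≤ b := csSup_le ⟨a, haS⟩ fun x hx => hx.1.2
  obtain ⟨ε, hε, h⟩ := loc (sSup S)
  obtain ⟨y, hy, hys⟩ := exists_lt_of_lt_csSup ⟨a, haS⟩ (sub_lt_self (sSup S) hε)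
  have hyS := le_csSup hbd hy
  have hm : y ≤ min b (sSup S + ε) := le_min hy.1.2 (by linarith)
  have h2 : p a (min b (sSup S + ε)) :=
    add _ _ _ hy.1.1 hm hy.2 (mono _ _ _ _ hys.le hm (min_le_right _ _) h)
  rcases min_cases b (sSup S + ε) with ⟨h3, _⟩ | ⟨h3, h4⟩
  · rwa [h3] at h2
  · rw [h3] at h2
    have : sSup S + ε ∈ S := ⟨⟨by linarith, h4.le⟩, h2⟩
    linarith [le_csSup hbd this]

lemma good_rect {d : ℕ} {α β B : ℝ} {γ : ℕ → ℝ} {Q F : (Fin (d+2) → ℂ) → ℂ} {Sg Ω : Set (Fin (d+2) → ℂ)}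
    (X : Ctx d α β B Q Sg Ω) (hγ : ∀ n, 0 < γ n) (hloc : ∀ t : ℂ, Good d γ Q F Sg Ω {t}) (a b c e : ℝ) (hab : a ≤ b) (hce : c ≤ e) :
    Good d γ Q F Sg Ω (Icc a b ×ℂ Icc c e) := by
  have hbox : ∀ a b c e a' b' c' e' : ℝ, a ≤ a' → b' ≤ b → c ≤ c' → e' ≤ e → Icc a' b' ×ℂ Icc c' e' ⊆ Icc a b ×ℂ Icc c e := by
    rintro a b c e a' b' c' e' h1 h2 h3 h4 z ⟨hz1, hz2⟩
    exact ⟨Icc_subset_Icc h1 h2 hz1, Icc_subset_Icc h3 h4 hz2⟩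
  have hloc2 : ∀ t : ℂ, ∃ ε > 0, Good d γ Q F Sg Ω (Icc (t.re - ε) (t.re + ε) ×ℂ Icc (t.im - ε) (t.im + ε)) := by
    intro t
    obtain ⟨U, oU, hU, h⟩ := hloc t
    obtain ⟨δ, hδ, hs⟩ := rect_thick (a := t.re) (b := t.re) (c := t.im) (e := t.im) oU le_rfl le_rfl (by
      rintro z ⟨⟨h1, h2⟩, h3, h4⟩
      apply hU
      exact Complex.ext (le_antisymm h2 h1) (le_antisymm h4 h3))
    exact ⟨2 * δ, by positivity, U, oU, hs, h⟩
  have hstrip : ∀ y : ℝ, ∃ ε > 0, Good d γ Q F Sg Ω (Icc a b ×ℂ Icc (y - ε) (y + ε)) := by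
    intro y
    refine interval_ind (fun a b => ∃ ε > 0, Good d γ Q F Sg Ω (Icc a b ×ℂ Icc (y - ε) (y + ε))) ?_ ?_ ?_ a b hab
    · rintro a b a' b' h1 _ h2 ⟨ε, hε, h⟩
      exact ⟨ε, hε, h.mono (hbox _ _ _ _ _ _ _ _ h1 h2 le_rfl le_rfl)⟩
    · rintro a b c h1 h2 ⟨ε, hε, h⟩ ⟨ε', hε', h'⟩
      have l1 := min_le_left ε ε'
      have l2 := min_le_right ε ε'
      have l3 : 0 < min ε ε' := lt_min hε hε'
      exact ⟨min ε ε', l3, mergeH X hγ h1 h2 (by linarith)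
        (h.mono (hbox _ _ _ _ _ _ _ _ le_rfl le_rfl (by linarith) (by linarith)))
        (h'.mono (hbox _ _ _ _ _ _ _ _ le_rfl le_rfl (by linarith) (by linarith)))⟩
    · intro x
      obtain ⟨ε, hε, h⟩ := hloc2 ⟨x, y⟩
      exact ⟨ε, hε, ε, hε, h⟩
  refine interval_ind (fun c e => Good d γ Q F Sg Ω (Icc a b ×ℂ Icc c e)) ?_ ?_ ?_ c e hce
  · intro c e c' e' h1 _ h2 h
    exact h.mono (hbox _ _ _ _ _ _ _ _ le_rfl le_rfl h1 h2)
  · intro c e f h1 h2 h h'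
    exact mergeV X hγ h1 h2 hab h h'
  · exact hstrip

lemma laurent {T₁ T₂ : ℝ} (h1 : 0 < T₁) (h12 : T₁ ≤ T₂) {q : ℂ → ℂ} {t : ℂ}
    (hq : ∀ z, T₁ ≤ ‖z‖ → ‖z‖ ≤ T₂ → DifferentiableAt ℂ q z) (ht1 : T₁ < ‖t‖) (ht2 : ‖t‖ < T₂) :
    (∮ τ in C(0, T₂), (τ - t)⁻¹ * q τ) - (∮ τ in C(0, T₁), (τ - t)⁻¹ * q τ) = 2 * Real.pi * I * q t := by
  have hT2 : 0 ≤ T₂ := by linarith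
  have hds : ∀ z, T₁ ≤ ‖z‖ → ‖z‖ ≤ T₂ → ContinuousAt (dslope q t) z := by
    intro z hz1 hz2
    by_cases h : z = t
    · subst h; rw [continuousAt_dslope_same]; exact hq z hz1 hz2
    · rw [continuousAt_dslope_of_ne h]; exact (hq z hz1 hz2).continuousAt
  have h0 := circleIntegral_eq_of_differentiable_on_annulus_off_countable (c := 0) h1 h12 (f := dslope q t)
    (countable_singleton t) (fun z hz => (hds z (by simpa using hz.2) (by simpa using hz.1)).continuousWithinAt) (by
      rintro z ⟨⟨hz1, hz2⟩, hz3⟩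
      simp at hz1 hz2 hz3
      exact (differentiableAt_dslope_of_ne hz3).2 (hq z hz2.le hz1.le))
  have key : ∀ T, T₁ ≤ T → T ≤ T₂ → 0 ≤ T → T ≠ ‖t‖ → (∮ τ in C(0, T), dslope q t τ) =
      (∮ τ in C(0, T), (τ - t)⁻¹ * q τ) - (∮ τ in C(0, T), (τ - t)⁻¹) * q t := by
    intro T a1 a2 a3 a4
    have hne : ∀ z ∈ Metric.sphere (0:ℂ) T, z - t ≠ 0 := by
      intro z hz h
      rw [sub_eq_zero] at h
      subst h; exact a4 (by simpa using hz.symm)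
    have i0 : ContinuousOn (fun τ : ℂ => (τ - t)⁻¹) (Metric.sphere 0 T) :=
      ContinuousOn.inv₀ (by fun_prop) hne
    have i1 : CircleIntegrable (fun τ => (τ - t)⁻¹ * q τ) 0 T := by
      apply ContinuousOn.circleIntegrable a3
      refine i0.mul ?_
      intro z hz
      have hz' : ‖z‖ = T := by simpa using hz
      exact (hq z (by linarith) (by linarith)).continuousAt.continuousWithinAt
    have i2 : CircleIntegrable (fun τ => (τ - t)⁻¹ * q t) 0 T :=
      ContinuousOn.circleIntegrable a3 (i0.mul continuousOn_const)
    have e : (∮ τ in C(0, T), (τ - t)⁻¹) * q t = ∮ τ in C(0, T), (τ - t)⁻¹ * q t := by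
      have := circleIntegral.integral_smul_const (fun τ : ℂ => (τ - t)⁻¹) (q t) 0 T
      simp only [smul_eq_mul] at this
      exact this.symm
    rw [e, ← circleIntegral.integral_sub i1 i2]
    apply circleIntegral.integral_congr a3
    intro z hz
    have := hne z hz
    simp only
    rw [dslope_of_ne _ (sub_ne_zero.1 this), slope_def_field]
    field_simp
  rw [key T₂ h12 le_rfl hT2 ht2.ne', key T₁ le_rfl h12 h1.le ht1.ne,
    circleIntegral.integral_sub_inv_of_mem_ball (by simpa using ht2)] at h0
  have hz : (∮ τ in C(0, T₁), (τ - t)⁻¹) = 0 := by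
    have hne : ∀ z ∈ Metric.closedBall (0:ℂ) T₁, z - t ≠ 0 := by
      intro z hz h
      rw [sub_eq_zero] at h
      subst h
      have : ‖z‖ ≤ T₁ := by simpa using hz
      linarith
    apply circleIntegral_eq_zero_of_differentiable_on_off_countable h1.le countable_empty
    · exact ContinuousOn.inv₀ (by fun_prop) hne
    · intro z hz
      exact DifferentiableAt.fun_inv (by fun_prop) (hne z (Metric.ball_subset_closedBall hz.1))
  rw [hz] at h0
  linear_combination h0

def mk2 {d : ℕ} (x : Fin (d+2) → ℂ) (a b : ℂ) : Fin (d+2) → ℂ :=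
  fun i => if i = 0 then a else if i = 1 then b else x i

lemma fin_one_ne_zero {d : ℕ} : (1 : Fin (d+2)) ≠ 0 := by simp

@[simp] lemma mk2_zero {d : ℕ} (x : Fin (d+2) → ℂ) (a b : ℂ) : mk2 x a b 0 = a := by simp [mk2]
@[simp] lemma mk2_one {d : ℕ} (x : Fin (d+2) → ℂ) (a b : ℂ) : mk2 x a b 1 = b := by simp [mk2]
lemma mk2_of_ne {d : ℕ} (x : Fin (d+2) → ℂ) (a b : ℂ) {j : Fin (d+2)} (h0 : j ≠ 0) (h1 : j ≠ 1) :
    mk2 x a b j = x j := by simp [mk2, h0, h1]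

lemma mk2_mem {d : ℕ} {x : Fin (d+2) → ℂ} {a b : ℂ} {U : Set ℂ} {r : ℝ} (ha : a ∈ U) (hb : ‖b‖ < r)
    (hx : ∀ j, j ≠ 0 → j ≠ 1 → ‖x j‖ < r) : mk2 x a b ∈ tube d U r := by
  refine ⟨by simpa using ha, fun j hj => ?_⟩
  by_cases h1 : j = 1
  · subst h1; simpa using hb
  · rw [mk2_of_ne _ _ _ hj h1]; exact hx j hj h1

lemma mk2_eq {d : ℕ} {x y : Fin (d+2) → ℂ} {a b : ℂ} (h0 : y 0 = a) (h1 : y 1 = b)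
    (h : ∀ j, j ≠ 0 → j ≠ 1 → y j = x j) : mk2 x a b = y := by
  funext j
  by_cases hj : j = 0
  · subst hj; simp [h0]
  by_cases hj1 : j = 1
  · subst hj1; simp [h1]
  rw [mk2_of_ne _ _ _ hj hj1, h j hj hj1]

lemma mk2_diff {E : Type*} [NormedAddCommGroup E] [NormedSpace ℂ E] {d : ℕ} {x : E → Fin (d+2) → ℂ} {a b : E → ℂ}
    {e : E} (hx : DifferentiableAt ℂ x e) (ha : DifferentiableAt ℂ a e) (hb : DifferentiableAt ℂ b e) :
    DifferentiableAt ℂ (fun y => mk2 (x y) (a y) (b y)) e := by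
  rw [differentiableAt_pi] at hx ⊢
  intro j
  unfold mk2
  split_ifs
  · exact ha
  · exact hb
  · exact hx j

lemma mk2_cont {E : Type*} [TopologicalSpace E] {d : ℕ} {x : E → Fin (d+2) → ℂ} {a b : E → ℂ}
    {s : Set E} (hx : ContinuousOn x s) (ha : ContinuousOn a s) (hb : ContinuousOn b s) :
    ContinuousOn (fun y => mk2 (x y) (a y) (b y)) s := by
  rw [continuousOn_pi] at hx ⊢
  intro j
  unfold mk2
  split_ifs
  · exact ha
  · exact hb
  · exact hx j

def phi {d : ℕ} (v : Fin (d+2) → ℂ) : Fin (d+2) → ℂ := mk2 v (v 0)⁻¹ (v 0 * v 1)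

lemma circ_bound {R M : ℝ} (hR : 0 < R) {G : ℂ → ℂ} (h : ∀ z ∈ Metric.sphere (0:ℂ) R, ‖G z‖ ≤ M) :
    ‖(2 * Real.pi * I : ℂ)⁻¹ * ∮ z in C(0, R), G z‖ ≤ R * M := by
  have := circleIntegral.norm_integral_le_of_norm_le_const hR.le h
  rw [norm_mul, norm_inv]
  have h2 : ‖(2 * Real.pi * I : ℂ)‖ = 2 * Real.pi := by
    simp [abs_of_pos Real.pi_pos]
  rw [h2, inv_mul_le_iff₀ Real.two_pi_pos]
  refine this.trans (le_of_eq ?_)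
  ring

lemma ann_split {d : ℕ} {V : Set ℂ} {T δ r r₃ M : ℝ} (hδ : 0 < δ) (hT : 2 * δ < T)
    (h1 : r₃ ≤ r) (h2 : r₃ ≤ r * (T - δ))
    (hV : ∀ z : ℂ, T - 2 * δ ≤ ‖z‖ → ‖z‖ ≤ T + 2 * δ → z ∈ V) (hM0 : 0 ≤ M)
    {q : (Fin (d+2) → ℂ) → ℂ} (hq : AnalyticOnNhd ℂ q (tube d V r)) (hM : ∀ v ∈ tube d V r, ‖q v‖ ≤ M) :
    ∃ q₀ qI : (Fin (d+2) → ℂ) → ℂ, AnalyticOnNhd ℂ q₀ (tube d (Metric.ball 0 (T + δ)) r) ∧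
      (∀ v ∈ tube d (Metric.ball 0 (T + δ)) r, ‖q₀ v‖ ≤ (T + 2 * δ) / δ * M) ∧
      AnalyticOnNhd ℂ qI (tube d (Metric.ball 0 (1 / (T - δ))) r₃) ∧
      (∀ v ∈ tube d (Metric.ball 0 (1 / (T - δ))) r₃, ‖qI v‖ ≤ (T + 2 * δ) / δ * M) ∧
      ∀ v ∈ tube d {t | T - δ < ‖t‖ ∧ ‖t‖ < T + δ} r, q v = q₀ v + qI (phi v) := by
  have hTd : 0 < T - δ := by linarith
  have hT1 : 0 < T - 2 * δ := by linarith
  have hT2 : 0 < T + 2 * δ := by linarith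
  have hVs1 : ∀ z ∈ Metric.sphere (0:ℂ) (T - 2 * δ), z ∈ V := fun z hz => by
    have hz' : ‖z‖ = T - 2 * δ := by simpa using hz
    exact hV z hz'.ge (by linarith)
  have hVs2 : ∀ z ∈ Metric.sphere (0:ℂ) (T + 2 * δ), z ∈ V := fun z hz => by
    have hz' : ‖z‖ = T + 2 * δ := by simpa using hz
    exact hV z (by linarith) hz'.le
  -- outer part
  have hn2 : ∀ z ∈ Metric.sphere (0:ℂ) (T + 2 * δ), ∀ t ∈ Metric.ball (0:ℂ) (T + δ), δ ≤ ‖z - t‖ := by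
    intro z hz t ht
    have hz' : ‖z‖ = T + 2 * δ := by simpa using hz
    have ht' : ‖t‖ < T + δ := by simpa using ht
    linarith [norm_sub_norm_le z t]
  have hne2 : ∀ z ∈ Metric.sphere (0:ℂ) (T + 2 * δ), ∀ t ∈ Metric.ball (0:ℂ) (T + δ), z - t ≠ 0 := by
    intro z hz t ht h
    have := hn2 z hz t ht
    rw [h, norm_zero] at this; linarith
  -- inner part
  have hn1 : ∀ z ∈ Metric.sphere (0:ℂ) (T - 2 * δ), ∀ w ∈ Metric.ball (0:ℂ) (1 / (T - δ)), δ / (T - δ) ≤ ‖1 - z * w‖ := by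
    intro z hz w hw
    have hz' : ‖z‖ = T - 2 * δ := by simpa using hz
    have hw' : ‖w‖ < 1 / (T - δ) := by simpa using hw
    have e := norm_sub_norm_le (1:ℂ) (z * w)
    rw [norm_one, norm_mul, hz'] at e
    have e2 : (T - 2 * δ) * ‖w‖ ≤ (T - 2 * δ) * (1 / (T - δ)) := by gcongr
    have e3 : 1 - (T - 2 * δ) * (1 / (T - δ)) = δ / (T - δ) := by field_simp; ring
    linarith
  have hne1 : ∀ z ∈ Metric.sphere (0:ℂ) (T - 2 * δ), ∀ w ∈ Metric.ball (0:ℂ) (1 / (T - δ)), 1 - z * w ≠ 0 := by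
    intro z hz t ht h
    have := hn1 z hz t ht
    rw [h, norm_zero] at this
    have : 0 < δ / (T - δ) := by positivity
    linarith
  have hmem : ∀ u ∈ tube d (Metric.ball 0 (1 / (T - δ))) r₃, ∀ z ∈ V, mk2 u z (u 0 * u 1) ∈ tube d V r := by
    intro u hu z hz
    have hu0 : ‖u 0‖ < 1 / (T - δ) := by simpa using hu.1
    have hu1 := hu.2 1 fin_one_ne_zero
    refine mk2_mem hz ?_ fun j hj _ => (hu.2 j hj).trans_le h1
    rw [norm_mul]
    have hr3 : 0 < r₃ := (norm_nonneg _).trans_lt hu1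
    calc ‖u 0‖ * ‖u 1‖ < 1 / (T - δ) * r₃ := by
          apply mul_lt_mul'' hu0 hu1 (norm_nonneg _) (norm_nonneg _)
      _ ≤ 1 / (T - δ) * (r * (T - δ)) := by gcongr
      _ = r := by field_simp
  refine ⟨fun v => (2 * Real.pi * I)⁻¹ * ∮ τ in C(0, T + 2 * δ), (τ - v 0)⁻¹ * q (Function.update v 0 τ),
    fun u => (2 * Real.pi * I)⁻¹ * ∮ τ in C(0, T - 2 * δ), u 0 * (1 - τ * u 0)⁻¹ * q (mk2 u τ (u 0 * u 1)), ?_, ?_, ?_, ?_, ?_⟩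
  · intro v hv
    refine analyticAt_const.fun_mul (param_circle (tube_open Metric.isOpen_ball r) hT2.le
      (F := fun τ v => (τ - v 0)⁻¹ * q (Function.update v 0 τ)) ?_ ?_ v hv)
    · apply ContinuousOn.mul
      · apply ContinuousOn.inv₀ (by fun_prop)
        rintro ⟨z, v⟩ ⟨hz, hv⟩
        exact hne2 z hz _ hv.1
      · refine hq.continuousOn.comp (f := fun p : ℂ × (Fin (d+2) → ℂ) => Function.update p.2 0 p.1)
          (Continuous.continuousOn ?_) ?_
        · apply Continuous.update <;> fun_prop
        · rintro ⟨z, v⟩ ⟨hz, hv⟩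
          exact tube_update hv (hVs2 z hz)
    · intro z hz v hv
      apply DifferentiableAt.differentiableWithinAt
      apply DifferentiableAt.fun_mul
      · exact DifferentiableAt.fun_inv (by fun_prop) (hne2 z hz _ hv.1)
      · refine DifferentiableAt.comp (g := q) (f := fun v : Fin (d+2) → ℂ => Function.update v 0 z) v
          (hq _ (tube_update hv (hVs2 z hz))).differentiableAt ?_
        rw [differentiableAt_pi]
        intro j
        by_cases hj : j = 0
        · subst hj; simp
        · simp only [Function.update_of_ne hj]; fun_prop
  · intro v hv
    have := circ_bound (M := δ⁻¹ * M) hT2 (G := fun τ => (τ - v 0)⁻¹ * q (Function.update v 0 τ)) (by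
      intro z hz
      rw [norm_mul, norm_inv]
      have := hn2 z hz _ hv.1
      have := hM _ (tube_update hv (hVs2 z hz))
      gcongr)
    refine this.trans (le_of_eq ?_)
    field_simp
  · intro u hu
    refine analyticAt_const.fun_mul (param_circle (tube_open Metric.isOpen_ball r₃) hT1.le
      (F := fun τ u => u 0 * (1 - τ * u 0)⁻¹ * q (mk2 u τ (u 0 * u 1))) ?_ ?_ u hu)
    · apply ContinuousOn.mul
      · apply ContinuousOn.mul (by fun_prop)
        apply ContinuousOn.inv₀ (by fun_prop)
        rintro ⟨z, v⟩ ⟨hz, hv⟩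
        exact hne1 z hz _ hv.1
      · refine hq.continuousOn.comp (f := fun p : ℂ × (Fin (d+2) → ℂ) => mk2 p.2 p.1 (p.2 0 * p.2 1))
          (mk2_cont (by fun_prop) (by fun_prop) (by fun_prop)) ?_
        rintro ⟨z, v⟩ ⟨hz, hv⟩
        exact hmem v hv z (hVs1 z hz)
    · intro z hz v hv
      apply DifferentiableAt.differentiableWithinAt
      apply DifferentiableAt.fun_mul
      · apply DifferentiableAt.fun_mul (by fun_prop)
        exact DifferentiableAt.fun_inv (by fun_prop) (hne1 z hz _ hv.1)
      · exact DifferentiableAt.comp (g := q) (f := fun v : Fin (d+2) → ℂ => mk2 v z (v 0 * v 1)) v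
          (hq _ (hmem v hv z (hVs1 z hz))).differentiableAt (mk2_diff (by fun_prop) (by fun_prop) (by fun_prop))
  · intro u hu
    have hu0 : ‖u 0‖ < 1 / (T - δ) := by simpa using hu.1
    have := circ_bound (M := 1 / (T - δ) * (δ / (T - δ))⁻¹ * M) hT1 (G := fun τ => u 0 * (1 - τ * u 0)⁻¹ * q (mk2 u τ (u 0 * u 1))) (by
      intro z hz
      rw [norm_mul, norm_mul, norm_inv]
      have := hn1 z hz _ hu.1
      have := hM _ (hmem u hu z (hVs1 z hz))
      gcongr)
    refine this.trans ?_
    have e : (T - 2 * δ) * (1 / (T - δ) * (δ / (T - δ))⁻¹ * M) = (T - 2 * δ) / δ * M := by field_simp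
    rw [e]
    gcongr
    linarith
  · intro v hv
    have hv0 : v 0 ≠ 0 := by
      intro h
      have := hv.1.1
      rw [h, norm_zero] at this; linarith
    have hl := laurent hT1 (by linarith : T - 2 * δ ≤ T + 2 * δ) (q := fun z => q (Function.update v 0 z)) (t := v 0) (by
      intro z hz1 hz2
      exact DifferentiableAt.comp (g := q) (f := fun t => Function.update v 0 t) z
        (hq _ (tube_update hv (hV z hz1 hz2))).differentiableAt (hasFDerivAt_update v z).differentiableAt)
      (by linarith [hv.1.1]) (by linarith [hv.1.2])
    rw [Function.update_eq_self] at hl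
    have e : (∮ τ in C(0, T - 2 * δ), phi v 0 * (1 - τ * phi v 0)⁻¹ * q (mk2 (phi v) τ (phi v 0 * phi v 1)))
        = - ∮ τ in C(0, T - 2 * δ), (τ - v 0)⁻¹ * q (Function.update v 0 τ) := by
      have : ∀ f : ℂ → ℂ, - (∮ τ in C(0, T - 2 * δ), f τ) = ∮ τ in C(0, T - 2 * δ), - f τ := by
        intro f
        have := circleIntegral.integral_const_mul (-1) f 0 (T - 2 * δ)
        simp only [neg_one_mul] at this
        exact this.symm
      rw [this]
      apply circleIntegral.integral_congr hT1.le
      intro z hz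
      have hz' : ‖z‖ = T - 2 * δ := by simpa using hz
      have hzv : z - v 0 ≠ 0 := by
        intro h
        rw [sub_eq_zero] at h
        rw [h] at hz'
        linarith [hv.1.1]
      have hzv' : v 0 - z ≠ 0 := by
        intro h; apply hzv; linear_combination -h
      have e1 : mk2 (phi v) z (phi v 0 * phi v 1) = Function.update v 0 z := by
        apply mk2_eq
        · simp
        · rw [Function.update_of_ne fin_one_ne_zero]
          simp only [phi, mk2_zero, mk2_one]
          field_simp
        · intro j h0 h1
          rw [Function.update_of_ne h0, phi, mk2_of_ne _ _ _ h0 h1]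
      simp only
      rw [e1]
      have e2 : phi v 0 * (1 - z * phi v 0)⁻¹ = - (z - v 0)⁻¹ := by
        simp only [phi, mk2_zero]
        have e3 : (1 - z * (v 0)⁻¹) = (v 0 - z) / v 0 := by field_simp
        rw [e3, inv_div, ← neg_sub (v 0) z, inv_neg, neg_neg]
        field_simp
      rw [e2, neg_mul]
    simp only
    rw [e, mul_neg, ← sub_eq_add_neg, ← mul_sub, hl, inv_mul_cancel_left₀ two_pi_I_ne_zero]

lemma polydisk_open (n : ℕ) (r : ℝ) : IsOpen (polydisk n r) := by
  have : polydisk n r = ⋂ j, {x | ‖x j‖ < r} := by ext x; simp [polydisk]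
  rw [this]
  exact isOpen_iInter_of_finite fun j => isOpen_lt (by fun_prop) continuous_const

lemma push_down {d : ℕ} {T δ r ρ M : ℝ} (hδ : 0 < δ) (hT : δ < T) (hr : 0 < r)
    (h1 : ρ ≤ r / 4) (h2 : ρ * T ≤ r / 2) (hM0 : 0 ≤ M)
    {G0 GI : (Fin (d+2) → ℂ) → ℂ} (a0 : AnalyticOnNhd ℂ G0 (tube d (Metric.ball 0 (T + δ)) r))
    (aI : AnalyticOnNhd ℂ GI (tube d (Metric.ball 0 (1 / (T - δ))) r))
    (hM : ∀ v ∈ tube d (Metric.ball 0 (1 / (T - δ))) r, ‖GI v‖ ≤ M)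
    (he : ∀ v ∈ tube d {t | T - δ < ‖t‖ ∧ ‖t‖ < T + δ} r, ‖v 0 * v 1‖ < r → G0 v = GI (phi v)) :
    ∃ h : (Fin (d+2) → ℂ) → ℂ, AnalyticOnNhd ℂ h (polydisk (d+2) ρ) ∧
      (∀ x ∈ polydisk (d+2) ρ, ‖h x‖ ≤ 2 * M) ∧
      ∀ x ∈ polydisk (d+2) ρ, x 0 ≠ 0 →
        (‖x 1‖ < (T + δ) * ‖x 0‖ → h x = G0 (mk2 x (x 1 / x 0) (x 0))) ∧
        ((T - δ) * ‖x 0‖ < ‖x 1‖ → h x = GI (mk2 x (x 0 / x 1) (x 1))) := by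
  have hTd : 0 < T - δ := by linarith
  have hR : 0 < r / 2 := by linarith
  have hT0 : 0 < T := by linarith
  have hx0 : ∀ x ∈ polydisk (d+2) ρ, (T - δ) * ‖x 0‖ < r / 2 := by
    intro x hx
    have h := hx 0
    have : ‖x 0‖ * T < ρ * T := by gcongr
    nlinarith [norm_nonneg (x 0)]
  have hmem : ∀ x ∈ polydisk (d+2) ρ, ∀ z : ℂ, (T - δ) * ‖x 0‖ < ‖z‖ → ‖z‖ < r →
      mk2 x (x 0 / z) z ∈ tube d (Metric.ball 0 (1 / (T - δ))) r := by
    intro x hx z hz hzr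
    refine mk2_mem ?_ hzr fun j _ _ => (hx j).trans_le (by linarith)
    have hz0 : 0 < ‖z‖ := lt_of_le_of_lt (by positivity) hz
    rw [mem_ball_zero_iff, norm_div, div_lt_div_iff₀ hz0 hTd]
    linarith
  have hs : ∀ z ∈ Metric.sphere (0:ℂ) (r/2), ‖z‖ = r / 2 := fun z hz => by simpa using hz
  have hmems : ∀ x ∈ polydisk (d+2) ρ, ∀ z ∈ Metric.sphere (0:ℂ) (r/2), 
      mk2 x (x 0 / z) z ∈ tube d (Metric.ball 0 (1 / (T - δ))) r := by
    intro x hx z hz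
    exact hmem x hx z (by rw [hs z hz]; exact hx0 x hx) (by rw [hs z hz]; linarith)
  have hsub : ∀ x ∈ polydisk (d+2) ρ, ∀ z ∈ Metric.sphere (0:ℂ) (r/2), r / 4 ≤ ‖z - x 1‖ := by
    intro x hx z hz
    have := hx 1
    have h3 := hs z hz
    linarith [norm_sub_norm_le z (x 1)]
  have hsub0 : ∀ x ∈ polydisk (d+2) ρ, ∀ z ∈ Metric.sphere (0:ℂ) (r/2), z - x 1 ≠ 0 := by
    intro x hx z hz h
    have := hsub x hx z hz
    rw [h, norm_zero] at this
    linarith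
  have hz0 : ∀ z ∈ Metric.sphere (0:ℂ) (r/2), z ≠ 0 := by
    intro z hz h
    have := hs z hz
    rw [h, norm_zero] at this
    linarith
  refine ⟨fun x => (2 * Real.pi * I : ℂ)⁻¹ * ∮ z in C(0, r/2), (z - x 1)⁻¹ * GI (mk2 x (x 0 / z) z), ?_, ?_, ?_⟩
  · refine analyticOnNhd_const.mul (param_circle (polydisk_open _ _) hR.le
      (F := fun z x => (z - x 1)⁻¹ * GI (mk2 x (x 0 / z) z)) ?_ ?_)
    · refine ContinuousOn.mul ?_ ?_
      · refine ContinuousOn.inv₀ (by fun_prop) ?_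
        rintro ⟨z, x⟩ ⟨hz, hx⟩
        exact hsub0 x hx z hz
      · refine ContinuousOn.comp (t := tube d (Metric.ball 0 (1 / (T - δ))) r) (g := GI) aI.continuousOn ?_ ?_
        · refine mk2_cont (by fun_prop) ?_ (by fun_prop)
          refine ContinuousOn.div (by fun_prop) (by fun_prop) ?_
          rintro ⟨z, x⟩ ⟨hz, hx⟩
          exact hz0 z hz
        · rintro ⟨z, x⟩ ⟨hz, hx⟩
          exact hmems x hx z hz
    · intro z hz x hx
      refine DifferentiableAt.differentiableWithinAt ?_
      refine DifferentiableAt.fun_mul ?_ ?_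
      · exact DifferentiableAt.fun_inv (by fun_prop) (hsub0 x hx z hz)
      · refine DifferentiableAt.comp (g := GI) (f := fun x => mk2 x (x 0 / z) z) x (aI _ (hmems x hx z hz)).differentiableAt ?_
        refine mk2_diff (by fun_prop) ?_ (by fun_prop)
        simp only [div_eq_mul_inv]
        fun_prop
  · intro x hx
    have := circ_bound hR (G := fun z => (z - x 1)⁻¹ * GI (mk2 x (x 0 / z) z)) (M := (r/4)⁻¹ * M) ?_
    · refine this.trans (le_of_eq ?_)
      field_simp
      ring
    · intro z hz
      rw [norm_mul, norm_inv]
      have := hsub x hx z hz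
      have h3 := hM _ (hmems x hx z hz)
      gcongr
  · intro x hx hx00
    have hxp : 0 < ‖x 0‖ := norm_pos_iff.2 hx00
    have hxr : ∀ j, ‖x j‖ < r := fun j => (hx j).trans_le (by linarith)
    have hm0 : ∀ z : ℂ, ‖z‖ < (T + δ) * ‖x 0‖ → mk2 x (z / x 0) (x 0) ∈ tube d (Metric.ball 0 (T + δ)) r := by
      intro z hz
      refine mk2_mem ?_ (hxr 0) fun j _ _ => hxr j
      rw [mem_ball_zero_iff, norm_div, div_lt_iff₀ hxp]
      exact hz
    have hO2 : IsOpen {z : ℂ | (T - δ) * ‖x 0‖ < ‖z‖ ∧ ‖z‖ < r} := by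
      rw [ofPred_and]
      exact (isOpen_lt (by fun_prop) (by fun_prop)).inter (isOpen_lt (by fun_prop) (by fun_prop))
    obtain ⟨g, ga, g0, gI⟩ := glue (E := ℂ) (O₁ := {z | ‖z‖ < (T + δ) * ‖x 0‖})
      (O₂ := {z | (T - δ) * ‖x 0‖ < ‖z‖ ∧ ‖z‖ < r}) (g₁ := fun z => G0 (mk2 x (z / x 0) (x 0)))
      (g₂ := fun z => GI (mk2 x (x 0 / z) z)) (isOpen_lt (by fun_prop) (by fun_prop))
      hO2
      (by
        refine DifferentiableOn.analyticOnNhd ?_ (isOpen_lt (by fun_prop) (by fun_prop))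
        intro z hz
        refine DifferentiableAt.differentiableWithinAt ?_
        refine DifferentiableAt.comp (g := G0) (f := fun z => mk2 x (z / x 0) (x 0)) z (a0 _ (hm0 z hz)).differentiableAt ?_
        refine mk2_diff (by fun_prop) ?_ (by fun_prop)
        simp only [div_eq_mul_inv]
        fun_prop)
      (by
        refine DifferentiableOn.analyticOnNhd ?_ hO2
        rintro z ⟨hz, hz2⟩
        refine DifferentiableAt.differentiableWithinAt ?_
        refine DifferentiableAt.comp (g := GI) (f := fun z => mk2 x (x 0 / z) z) z (aI _ (hmem x hx z hz hz2)).differentiableAt ?_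
        have hz0 : z ≠ 0 := norm_pos_iff.1 (lt_of_le_of_lt (by positivity) hz)
        refine mk2_diff (x := fun _ => x) (a := fun z => x 0 / z) (b := fun z => z) (by fun_prop) ?_ (by fun_prop)
        exact DifferentiableAt.fun_div (by fun_prop) (by fun_prop) hz0)
      (by
        rintro z hz ⟨hz1, hz2⟩
        have hz : ‖z‖ < (T + δ) * ‖x 0‖ := hz
        have hz0 : z ≠ 0 := norm_pos_iff.1 (lt_of_le_of_lt (by positivity) hz1)
        have e1 := he (mk2 x (z / x 0) (x 0)) (by
          refine mk2_mem ?_ (hxr 0) fun j _ _ => hxr j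
          refine ⟨?_, ?_⟩
          · rw [norm_div, lt_div_iff₀ hxp]; exact hz1
          · rw [norm_div, div_lt_iff₀ hxp]; exact hz) (by
          simp only [mk2_zero, mk2_one]
          rwa [div_mul_cancel₀ _ hx00])
        simp only [e1]
        congr 1
        symm
        refine mk2_eq ?_ ?_ ?_
        · simp [phi]
        · simp [phi, div_mul_cancel₀ _ hx00]
        · intro j hj0 hj1
          simp [phi, mk2_of_ne _ _ _ hj0 hj1])
    have hball : ∀ z : ℂ, ‖z‖ < r → z ∈ {z : ℂ | ‖z‖ < (T + δ) * ‖x 0‖} ∪ {z | (T - δ) * ‖x 0‖ < ‖z‖ ∧ ‖z‖ < r} := by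
      intro z hz
      by_cases h : ‖z‖ < (T + δ) * ‖x 0‖
      · exact Or.inl h
      · refine Or.inr ⟨?_, hz⟩
        push Not at h
        nlinarith
    have hd : DifferentiableOn ℂ g (Metric.closedBall 0 (r/2)) := by
      intro z hz
      have : ‖z‖ ≤ r / 2 := by simpa using hz
      exact (ga z (hball z (by linarith))).differentiableAt.differentiableWithinAt
    have hx1 : x 1 ∈ Metric.ball (0:ℂ) (r/2) := by
      rw [mem_ball_zero_iff]; linarith [hx 1]
    have key : (2 * Real.pi * I : ℂ)⁻¹ * (∮ z in C(0, r/2), (z - x 1)⁻¹ * GI (mk2 x (x 0 / z) z)) = g (x 1) := by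
      have h3 := hd.circleIntegral_sub_inv_smul hx1
      have h4 : (∮ z in C(0, r/2), (z - x 1)⁻¹ * GI (mk2 x (x 0 / z) z)) = ∮ z in C(0, r/2), (z - x 1)⁻¹ • g z := by
        refine circleIntegral.integral_congr hR.le fun z hz => ?_
        simp only [smul_eq_mul]
        rw [gI z ⟨by rw [hs z hz]; exact hx0 x hx, by rw [hs z hz]; linarith⟩]
      rw [h4, h3, smul_eq_mul, ← mul_assoc, inv_mul_cancel₀ Complex.two_pi_I_ne_zero, one_mul]
    refine ⟨fun h => ?_, fun h => ?_⟩
    · simp only [key]; exact g0 _ h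
    · simp only [key]; exact gI _ ⟨h, hxr 1⟩

lemma bI_phi {d : ℕ} (v : Fin (d+2) → ℂ) (h : v 0 ≠ 0) : blowUpInf d (phi v) = blowUpC d 0 v := by
  funext i
  by_cases h0 : i = 0
  · subst h0; simp [blowUpInf, blowUpC, phi, h]
  · by_cases h1 : i = 1
    · subst h1; simp [blowUpInf, blowUpC, phi]
    · simp [blowUpInf, blowUpC, phi, h0, h1, mk2_of_ne _ _ _ h0 h1]

lemma diff_bI (d : ℕ) : Differentiable ℂ (blowUpInf d) := by
  rw [differentiable_pi]
  intro i
  by_cases h0 : i = 0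
  · simp only [blowUpInf, h0, if_true]; fun_prop
  · simp only [blowUpInf, h0, if_false]; fun_prop

lemma diff_bC (d : ℕ) (ξ : ℂ) : Differentiable ℂ (blowUpC d ξ) := by
  rw [differentiable_pi]
  intro i
  by_cases h0 : i = 0
  · simp only [blowUpC, h0, if_true]; fun_prop
  · by_cases h1 : i = 1
    · simp only [blowUpC, h1, fin_one_ne_zero, if_true, if_false]; fun_prop
    · simp only [blowUpC, h0, h1, if_false]; fun_prop

lemma an_comp {n m : ℕ} {h : (Fin n → ℂ) → ℂ} {b : (Fin m → ℂ) → Fin n → ℂ} {Ω : Set (Fin n → ℂ)} {D : Set (Fin m → ℂ)}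
    (hh : AnalyticOnNhd ℂ h Ω) (hD : IsOpen D) (hb : ∀ v ∈ D, DifferentiableAt ℂ b v) (hm : ∀ v ∈ D, b v ∈ Ω) :
    AnalyticOnNhd ℂ (fun v => h (b v)) D := by
  refine an_of_diff hD fun v hv => DifferentiableAt.differentiableWithinAt ?_
  exact DifferentiableAt.comp (g := h) (f := b) v (hh _ (hm v hv)).differentiableAt (hb v hv)

lemma ann_thick {T η : ℝ} (hT : 0 < T) {z : ℂ} (h : T - η ≤ ‖z‖) (h' : ‖z‖ ≤ T + η) (hη : η < T) :
    z ∈ Metric.cthickening η (Metric.sphere (0:ℂ) T) := by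
  have hz : 0 < ‖z‖ := by linarith
  have hz' : z ≠ 0 := norm_pos_iff.1 hz
  refine Metric.mem_cthickening_of_dist_le z ((T / ‖z‖ : ℝ) • z) _ _ ?_ ?_
  · rw [mem_sphere_zero_iff_norm, norm_smul, Real.norm_of_nonneg (by positivity), div_mul_cancel₀ _ hz.ne']
  · rw [dist_eq_norm]
    have : z - ((T / ‖z‖ : ℝ) • z) = (1 - T / ‖z‖ : ℝ) • z := by rw [sub_smul, one_smul]
    rw [this, norm_smul, Real.norm_eq_abs, ← abs_of_pos hz, ← abs_mul, sub_mul, abs_of_pos hz, div_mul_cancel₀ _ hz.ne', abs_le]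
    constructor <;> linarith

lemma inf_glue {d : ℕ} {α β B ρ₁ : ℝ} {γ : ℕ → ℝ} {P f : (Fin (d+2) → ℂ) → ℂ} {S : Set (Fin (d+2) → ℂ)}
    (X : Ctx d α β B (fun v => P (blowUpC d 0 v)) {v | blowUpC d 0 v ∈ S} {v | blowUpC d 0 v ∈ polydisk (d+2) ρ₁})
    (hγ : ∀ n, 0 < γ n) (hB : ∀ x ∈ polydisk (d+2) ρ₁, ‖P x‖ ≤ B) (hP : AnalyticOnNhd ℂ P (polydisk (d+2) ρ₁))
    (hloc : ∀ t : ℂ, Good d γ (fun v => P (blowUpC d 0 v)) (fun v => f (blowUpC d 0 v)) {v | blowUpC d 0 v ∈ S}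
      {v | blowUpC d 0 v ∈ polydisk (d+2) ρ₁} {t})
    {rI CI AI : ℝ} {gI : ℕ → (Fin (d+2) → ℂ) → ℂ} (hrI : 0 < rI) (hCI : 0 < CI) (hAI : 0 < AI)
    (hm : ∀ v ∈ polydisk (d+2) rI, blowUpInf d v ∈ polydisk (d+2) ρ₁)
    (hI : Fam γ (fun v => P (blowUpInf d v)) (fun v => f (blowUpInf d v)) {v | blowUpInf d v ∈ S} (polydisk (d+2) rI) gI CI AI) :
    ∃ T δ r C A : ℝ, 0 < δ ∧ δ < T ∧ 0 < r ∧ 0 < C ∧ 0 < A ∧ ∃ G0 GI : ℕ → (Fin (d+2) → ℂ) → ℂ,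
      Fam γ (fun v => P (blowUpC d 0 v)) (fun v => f (blowUpC d 0 v)) {v | blowUpC d 0 v ∈ S} 
        (tube d (Metric.ball 0 (T + δ)) r) G0 C A ∧ 
      Fam γ (fun v => P (blowUpInf d v)) (fun v => f (blowUpInf d v)) {v | blowUpInf d v ∈ S} 
        (tube d (Metric.ball 0 (1 / (T - δ))) r) GI C A ∧
      ∀ n, ∀ v ∈ tube d {t | T - δ < ‖t‖ ∧ ‖t‖ < T + δ} r, ‖v 0 * v 1‖ < r → G0 n v = GI n (phi v) := by
  obtain ⟨T, hTdef⟩ : ∃ T : ℝ, T = 2 / rI := ⟨_, rfl⟩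
  have hT : 0 < T := by rw [hTdef]; positivity
  have hTrI : T * rI = 2 := by rw [hTdef]; field_simp
  obtain ⟨U, hU, hKU, r, hr, hUO, g, C, hC, A, hA, hF⟩ := good_rect X hγ hloc (-T) T (-T) T (by linarith) (by linarith)
  have hcU : Metric.closedBall (0:ℂ) T ⊆ U := by
    intro z hz
    have hz : ‖z‖ ≤ T := by simpa using hz
    refine hKU ?_
    rw [mem_reProdIm]
    have h1 := abs_le.1 ((abs_re_le_norm z).trans hz)
    have h2 := abs_le.1 ((abs_im_le_norm z).trans hz)
    exact ⟨h1, h2⟩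
  obtain ⟨U', hU'⟩ : ∃ U' : Set ℂ, U' = U ∩ ({t | 1 / rI < ‖t‖} ∩ {t | ‖t‖ < T + 1}) := ⟨_, rfl⟩
  have hU'o : IsOpen U' := by
    rw [hU']
    exact hU.inter ((isOpen_lt (by fun_prop) (by fun_prop)).inter (isOpen_lt (by fun_prop) (by fun_prop)))
  obtain ⟨r₁, hr₁⟩ : ∃ r₁ : ℝ, r₁ = min r (min rI (rI / (T + 1))) := ⟨_, rfl⟩
  have hr₁0 : 0 < r₁ := by rw [hr₁]; positivity
  have hr₁r : r₁ ≤ r := by rw [hr₁]; exact min_le_left _ _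
  have hr₁I : r₁ ≤ rI := by rw [hr₁]; exact (min_le_right _ _).trans (min_le_left _ _)
  have hr₁T : (T + 1) * r₁ ≤ rI := by
    have : r₁ ≤ rI / (T + 1) := by rw [hr₁]; exact (min_le_right _ _).trans (min_le_right _ _)
    rw [le_div_iff₀ (by linarith)] at this
    linarith
  have hv0 : ∀ v ∈ tube d U' r₁, v 0 ≠ 0 := by
    intro v hv
    have h := hv.1
    rw [hU'] at h
    have h2 : 1 / rI < ‖v 0‖ := h.2.1
    exact norm_pos_iff.1 (lt_trans (by positivity) h2)
  have hphi : ∀ v ∈ tube d U' r₁, phi v ∈ polydisk (d+2) rI := by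
    intro v hv
    have h := hv.1
    rw [hU'] at h
    have h2 : 1 / rI < ‖v 0‖ := h.2.1
    have h3 : ‖v 0‖ < T + 1 := h.2.2
    intro j
    by_cases h0 : j = 0
    · subst h0
      simp only [phi, mk2_zero, norm_inv]
      rw [one_div] at h2
      exact inv_lt_of_inv_lt₀ hrI h2
    · by_cases h1 : j = 1
      · subst h1
        simp only [phi, mk2_one, norm_mul]
        have h4 := hv.2 1 fin_one_ne_zero
        refine lt_of_lt_of_le ?_ hr₁T
        exact mul_lt_mul'' h3 h4 (norm_nonneg _) (norm_nonneg _)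
      · simp only [phi, mk2_of_ne _ _ _ h0 h1]
        exact (hv.2 j h0).trans_le hr₁I
  obtain ⟨Cm, hCm⟩ : ∃ Cm, Cm = max C CI := ⟨_, rfl⟩
  obtain ⟨Am, hAm⟩ : ∃ Am, Am = max A AI := ⟨_, rfl⟩
  have hC1 : C ≤ Cm := by rw [hCm]; exact le_max_left _ _
  have hC2 : CI ≤ Cm := by rw [hCm]; exact le_max_right _ _
  have hA1 : A ≤ Am := by rw [hAm]; exact le_max_left _ _
  have hA2 : AI ≤ Am := by rw [hAm]; exact le_max_right _ _
  have hCm0 : 0 < Cm := by linarith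
  have hAm0 : 0 < Am := by linarith
  have hUU : U' ⊆ U := by rw [hU']; exact inter_subset_left
  have f1 : Fam γ (fun v => P (blowUpC d 0 v)) (fun v => f (blowUpC d 0 v)) {v | blowUpC d 0 v ∈ S} 
        (tube d U' r₁) g Cm Am := hF.mono hγ hC hA hC1 hA1 (tube_mono hUU hr₁r)
  have fI : Fam γ (fun v => P (blowUpInf d v)) (fun v => f (blowUpInf d v)) {v | blowUpInf d v ∈ S} (polydisk (d+2) rI) gI Cm Am :=
    hI.mono hγ hCI hAI hC2 hA2 subset_rfl
  have f2 : Fam γ (fun v => P (blowUpC d 0 v)) (fun v => f (blowUpC d 0 v)) {v | blowUpC d 0 v ∈ S} 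
        (tube d U' r₁) (fun n v => gI n (phi v)) Cm Am := by
    refine ⟨fun n => ?_, fun n v hv => fI.2.1 n _ (hphi v hv), fun n v hv hvS => ?_⟩
    · refine an_comp (fI.1 n) (tube_open hU'o _) (fun v hv => ?_) hphi
      refine mk2_diff (by fun_prop) ?_ (by fun_prop)
      exact DifferentiableAt.fun_inv (by fun_prop) (hv0 v hv)
    · have e := bI_phi v (hv0 v hv)
      have := fI.2.2 n _ (hphi v hv) (by simpa only [mem_ofPred_eq, e] using hvS)
      simpa only [e] using this
  have hLU : Metric.sphere (0:ℂ) T ⊆ U' := by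
    intro z hz
    have hz' : ‖z‖ = T := by simpa using hz
    rw [hU']
    refine ⟨hcU (Metric.sphere_subset_closedBall hz), ?_, ?_⟩
    · change 1 / rI < ‖z‖
      rw [hz', div_lt_iff₀ hrI]; linarith
    · change ‖z‖ < T + 1
      linarith
  obtain ⟨V, hV, hLV, hVU, r', hr', hr'r, A', hA', q, hqa, hq⟩ := 
    fam_div X hU'o hr₁0 ((tube_mono hUU hr₁r).trans hUO) hAm0 f1 f2 (isCompact_sphere (0:ℂ) T) hLU
  obtain ⟨δ₂, hδ₂, hth⟩ := (isCompact_sphere (0:ℂ) T).exists_cthickening_subset_open hV hLV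
  obtain ⟨δ, hδdef⟩ : ∃ δ, δ = min (δ₂ / 2) (T / 4) := ⟨_, rfl⟩
  have hδ : 0 < δ := by rw [hδdef]; positivity
  have hδ1 : 2 * δ ≤ δ₂ := by
    have : δ ≤ δ₂ / 2 := by rw [hδdef]; exact min_le_left _ _
    linarith
  have hδ2 : δ ≤ T / 4 := by rw [hδdef]; exact min_le_right _ _
  have hann : ∀ z : ℂ, T - 2 * δ ≤ ‖z‖ → ‖z‖ ≤ T + 2 * δ → z ∈ V := by
    intro z h1 h2
    exact hth (Metric.cthickening_mono hδ1 _ (ann_thick hT h1 h2 (by linarith)))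
  have hbU : Metric.ball (0:ℂ) (T + δ) ⊆ U := by
    intro z hz
    have hz : ‖z‖ < T + δ := by simpa using hz
    by_cases h : ‖z‖ ≤ T
    · exact hcU (by simpa using h)
    · push Not at h
      exact hUU (hVU (hann z (by linarith) (by linarith)))
  have hTd : 0 < T - δ := by linarith
  have hTI : 1 / (T - δ) ≤ rI := by
    rw [div_le_iff₀ hTd]; nlinarith
  obtain ⟨r₃, hr₃⟩ : ∃ r₃ : ℝ, r₃ = min r' (min (r' * (T - δ)) rI) := ⟨_, rfl⟩
  have hr₃0 : 0 < r₃ := by rw [hr₃]; positivity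
  have hr₃a : r₃ ≤ r' := by rw [hr₃]; exact min_le_left _ _
  have hr₃b : r₃ ≤ r' * (T - δ) := by rw [hr₃]; exact (min_le_right _ _).trans (min_le_left _ _)
  have hr₃c : r₃ ≤ rI := by rw [hr₃]; exact (min_le_right _ _).trans (min_le_right _ _)
  have sp : ∀ n, _ := fun n => ann_split (d := d) (V := V) (q := q n) hδ (by linarith : 2 * δ < T) hr₃a hr₃b hann
    (M := 2 * Cm * A' ^ n * γ n) (by have := hγ n; positivity) (hqa n) (fun v hv => (hq n v hv).2)
  choose q₀ qI h0a h0b hIa hIb hsp using sp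
  have hsubT : tube d (Metric.ball 0 (T + δ)) r₃ ⊆ tube d U r := tube_mono hbU (by linarith)
  have hsubI : tube d (Metric.ball 0 (1 / (T - δ))) r₃ ⊆ polydisk (d+2) rI := by
    intro v hv j
    by_cases h0 : j = 0
    · subst h0
      have : ‖v 0‖ < 1 / (T - δ) := by simpa using hv.1
      linarith
    · exact (hv.2 j h0).trans_le hr₃c
  have hc0 : 0 < (T + 2 * δ) / δ * (2 * Cm) := by positivity
  have F0 := fam_corr (hF.mono hγ hC hA hC1 hA1 hsubT) hγ hCm0 hAm0 hc0 hA' X.hB0 (q := q₀) (fun v hv => X.hB v (hUO (hsubT hv)))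
    (fun v hv => X.hQ v (hUO (hsubT hv))) (fun n v hv => h0a n v (tube_mono subset_rfl hr₃a hv)) (fun n v hv => by
      refine (h0b n v (tube_mono subset_rfl hr₃a hv)).trans (le_of_eq (by ring)))
  have FI := fam_corr (fI.mono hγ hCm0 hAm0 le_rfl le_rfl hsubI) hγ hCm0 hAm0 hc0 hA' X.hB0 (q := fun n v => - qI n v) 
    (fun v hv => hB _ (hm v (hsubI hv)))
    (an_comp hP (tube_open Metric.isOpen_ball _) (fun v _ => (diff_bI d) v) (fun v hv => hm v (hsubI hv))) 
    (fun n => (hIa n).neg) (fun n v hv => by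
      rw [norm_neg]
      refine (hIb n v hv).trans (le_of_eq (by ring)))
  refine ⟨T, δ, r₃, _, _, hδ, by linarith, hr₃0, ?_, ?_, _, _, F0, FI, ?_⟩
  · positivity
  · have := X.hB0
    positivity
  · intro n v hv hv1
    have hv' := tube_mono (r' := r') subset_rfl hr₃a hv
    have hvV : v ∈ tube d V r' := ⟨hann _ (by linarith [hv.1.1]) (by linarith [hv.1.2]), hv'.2⟩
    have e1 := (hq n v hvV).1
    have e2 := hsp n v hv'
    have e3 := bI_phi v (hv0 v (tube_mono hVU hr'r hvV))
    simp only [e3]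
    rw [e2] at e1
    linear_combination e1

lemma polydisk_mono {n : ℕ} {r r' : ℝ} (h : r ≤ r') : polydisk n r ⊆ polydisk n r' :=
  fun _ hx j => (hx j).trans_le h

lemma polydisk_ball {n : ℕ} {r : ℝ} (hr : 0 < r) : polydisk n r = Metric.ball 0 r := by
  ext x
  rw [mem_ball_zero_iff, pi_norm_lt_iff hr]
  rfl

lemma cont_small {n m : ℕ} {b : (Fin n → ℂ) → Fin m → ℂ} (hb : Continuous b) (h0 : b 0 = 0) {ε : ℝ} (hε : 0 < ε) :
    ∃ r > 0, ∀ v ∈ polydisk n r, b v ∈ polydisk m ε := by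
  have h1 : b ⁻¹' (polydisk m ε) ∈ nhds 0 := by
    refine hb.continuousAt.preimage_mem_nhds ?_
    rw [h0]
    exact (polydisk_open m ε).mem_nhds fun j => by simpa using hε
  obtain ⟨r, hr, h⟩ := Metric.mem_nhds_iff.1 h1
  refine ⟨r, hr, fun v hv => ?_⟩
  rw [polydisk_ball hr] at hv
  exact h hv

lemma mem_PSector {n : ℕ} {P : (Fin n → ℂ) → ℂ} {a b r : ℝ} {x : Fin n → ℂ} :
    x ∈ PSector n P a b r ↔ (∀ j, x j ≠ 0) ∧ x ∈ polydisk n r ∧ inSec a b (P x) := by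
  constructor
  · rintro ⟨h1, h2⟩
    exact ⟨fun j => norm_pos_iff.1 (h1 j).1, fun j => (h1 j).2, h2⟩
  · rintro ⟨h1, h2, h3⟩
    exact ⟨fun j => ⟨norm_pos_iff.2 (h1 j), h2 j⟩, h3⟩

lemma PSector_open {n : ℕ} {P : (Fin n → ℂ) → ℂ} {a b r : ℝ} (hP : ContinuousOn P (polydisk n r)) :
    IsOpen (PSector n P a b r) := by
  have : PSector n P a b r = (⋂ j, {x | x j ≠ 0}) ∩ (polydisk n r ∩ P ⁻¹' {w | inSec a b w}) := by
    ext x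
    rw [mem_PSector]
    simp
  rw [this]
  exact (isOpen_iInter_of_finite fun j => isOpen_ne_fun (by fun_prop) (by fun_prop)).inter
    (hP.isOpen_inter_preimage (polydisk_open _ _) (inSec_open a b))

lemma est_ext {n m : ℕ} {b : (Fin n → ℂ) → Fin m → ℂ} (hb : Continuous b) {P f : (Fin m → ℂ) → ℂ} {g : (Fin n → ℂ) → ℂ}
    {S : Set (Fin m → ℂ)} (hS : IsOpen S) (hP : ContinuousOn P S) (hf : ContinuousOn f S) {r α β K : ℝ} {k : ℕ}
    (hSs : ∀ x ∈ S, inSec α β (P x))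
    (hg : ContinuousOn g (polydisk n r))
    (H : ∀ v ∈ PSector n (fun w => P (b w)) α β r, b v ∈ S → ‖f (b v) - g v‖ ≤ K * ‖P (b v)‖ ^ k) :
    ∀ v ∈ polydisk n r, b v ∈ S → ‖f (b v) - g v‖ ≤ K * ‖P (b v)‖ ^ k := by
  intro v hv hvS
  have := sec_ext (D := polydisk n r ∩ b ⁻¹' S) ((polydisk_open n r).inter (hS.preimage hb)) (α := α) (β := β) 
    (h := fun v => f (b v) - g v) (Q := fun v => P (b v)) (K := K) (m := k) 
    (ContinuousOn.sub (ContinuousOn.comp (g := f) (t := S) hf hb.continuousOn (fun x hx => hx.2)) (hg.mono inter_subset_left))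
    (ContinuousOn.comp (g := P) (t := S) hP hb.continuousOn (fun x hx => hx.2)) 
    (fun w hw hw0 hws => H w (mem_PSector.2 ⟨hw0, hw.1, hws⟩) hw.2)
  exact this v ⟨hv, hvS⟩ (hSs _ hvS)

lemma bC_psi {d : ℕ} (x : Fin (d+2) → ℂ) (h : x 0 ≠ 0) : blowUpC d 0 (mk2 x (x 1 / x 0) (x 0)) = x := by
  funext i
  by_cases h0 : i = 0
  · subst h0; simp [blowUpC]
  · by_cases h1 : i = 1
    · subst h1; simp [blowUpC, h]
    · simp [blowUpC, h0, h1, mk2_of_ne _ _ _ h0 h1]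

lemma bI_psi {d : ℕ} (x : Fin (d+2) → ℂ) (h : x 1 ≠ 0) : blowUpInf d (mk2 x (x 0 / x 1) (x 1)) = x := by
  funext i
  by_cases h0 : i = 0
  · subst h0; simp [blowUpInf, h]
  · by_cases h1 : i = 1
    · subst h1; simp [blowUpInf]
    · simp [blowUpInf, h0, mk2_of_ne _ _ _ h0 h1]

lemma bC_shift {d : ℕ} (ξ : ℂ) (v : Fin (d+2) → ℂ) : blowUpC d ξ (mk2 v (v 0 - ξ) (v 1)) = blowUpC d 0 v := by
  funext i
  by_cases h0 : i = 0
  · subst h0; simp [blowUpC]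
  · by_cases h1 : i = 1
    · subst h1; simp [blowUpC]
    · simp [blowUpC, h0, h1, mk2_of_ne _ _ _ h0 h1]

lemma mk_ctx {d : ℕ} {ρ₀ ρ₁ : ℝ} (h0 : 0 < ρ₁) (h1 : ρ₁ < ρ₀) {P : (Fin (d + 2) → ℂ) → ℂ}
    (hP : AnalyticOnNhd ℂ P (polydisk (d + 2) ρ₀)) (hPne : ∃ x ∈ polydisk (d + 2) ρ₀, P x ≠ 0)
    {α β : ℝ} (hαβ : α < β) : ∃ B, (∀ x ∈ polydisk (d+2) ρ₁, ‖P x‖ ≤ B) ∧ 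
    Ctx d α β B (fun v => P (blowUpC d 0 v)) {v | blowUpC d 0 v ∈ PSector (d+2) P α β ρ₀} 
      {v | blowUpC d 0 v ∈ polydisk (d+2) ρ₁} := by
  have hsub : Metric.closedBall (0 : Fin (d+2) → ℂ) ρ₁ ⊆ polydisk (d+2) ρ₀ := by
    rw [polydisk_ball (h0.trans h1)]
    exact Metric.closedBall_subset_ball h1
  obtain ⟨B, hB⟩ := (isCompact_closedBall (0 : Fin (d+2) → ℂ) ρ₁).exists_bound_of_continuousOn (hP.continuousOn.mono hsub)
  have hB' : ∀ x ∈ polydisk (d+2) ρ₁, ‖P x‖ ≤ B := by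
    intro x hx
    rw [polydisk_ball h0] at hx
    exact hB x (Metric.ball_subset_closedBall hx)
  have hΩ : IsOpen {v | blowUpC d 0 v ∈ polydisk (d+2) ρ₁} := (polydisk_open (d+2) ρ₁).preimage (diff_bC d 0).continuous
  refine ⟨B, hB', hαβ, hΩ, ?_, ?_, ?_, ?_, ?_⟩
  · exact (norm_nonneg _).trans (hB 0 (by simpa using h0.le))
  · exact fun v hv => hB' _ hv
  · exact an_comp hP hΩ (fun v _ => diff_bC d 0 v) (fun v hv => polydisk_mono h1.le hv)
  · intro v hv hz
    have hvn : ∀ᶠ w in nhds v, w ∈ {v | blowUpC d 0 v ∈ polydisk (d+2) ρ₁} := hΩ.mem_nhds hv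
    obtain ⟨w, hw0, hwΩ, hwz⟩ := ((nz_dense v).and_eventually (hvn.and (eventually_eventually_nhds.2 hz))).exists
    obtain ⟨y, hy⟩ : ∃ y, y = blowUpC d 0 w := ⟨_, rfl⟩
    have hy0 : y 0 = w 1 := by rw [hy]; simp [blowUpC]
    have hy1 : y 1 = w 0 * w 1 := by rw [hy]; simp [blowUpC]
    have hyn : y 0 ≠ 0 := by rw [hy0]; exact hw0 1
    have hc : ContinuousAt (fun x : Fin (d+2) → ℂ => mk2 x (x 1 / x 0) (x 0)) y := by
      refine DifferentiableAt.continuousAt (𝕜 := ℂ) (mk2_diff (by fun_prop) ?_ (by fun_prop))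
      simp only [div_eq_mul_inv]
      exact DifferentiableAt.fun_mul (by fun_prop) (DifferentiableAt.fun_inv (by fun_prop) hyn)
    have hcy : mk2 y (y 1 / y 0) (y 0) = w := by
      refine mk2_eq ?_ hy0.symm ?_
      · rw [hy0, hy1, mul_div_cancel_right₀ _ (hw0 1)]
      · intro j hj0 hj1
        rw [hy]; simp [blowUpC, hj0, hj1]
    have hPz : P =ᶠ[nhds y] 0 := by
      have h3 : ∀ᶠ x in nhds y, P (blowUpC d 0 (mk2 x (x 1 / x 0) (x 0))) = 0 := by
        refine hc.eventually (p := fun x => P (blowUpC d 0 x) = 0) ?_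
        simp only [hcy]
        exact hwz
      have h4 : ∀ᶠ x : Fin (d+2) → ℂ in nhds y, x 0 ≠ 0 :=
        (isOpen_ne_fun (f := fun x : Fin (d+2) → ℂ => x 0) (g := fun _ => 0) (by fun_prop) (by fun_prop)).mem_nhds hyn
      filter_upwards [h3, h4] with x hx hx'
      rwa [bC_psi x hx'] at hx
    have hyp : y ∈ polydisk (d+2) ρ₀ := by rw [hy]; exact polydisk_mono h1.le hwΩ
    have hpre : IsPreconnected (polydisk (d+2) ρ₀) := by
      rw [polydisk_ball (h0.trans h1)]
      exact (convex_ball _ _).isPreconnected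
    obtain ⟨x, hx, hxP⟩ := hPne
    exact hxP (hP.eqOn_zero_of_preconnected_of_eventuallyEq_zero hpre hyp hPz hx)
  · intro v hv hv0 hs
    refine mem_PSector.2 ⟨fun j => ?_, polydisk_mono h1.le hv, hs⟩
    by_cases hj0 : j = 0
    · subst hj0; simpa [blowUpC] using hv0 1
    · by_cases hj1 : j = 1
      · subst hj1; simpa [blowUpC] using ⟨hv0 0, hv0 1⟩
      · simpa [blowUpC, hj0, hj1] using hv0 j

lemma local_good {d : ℕ} {ρ₀ ρ₁ : ℝ} (h0 : 0 < ρ₁) (h1 : ρ₁ < ρ₀) {P f : (Fin (d + 2) → ℂ) → ℂ} {γ : ℕ → ℝ}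
    (hP : AnalyticOnNhd ℂ P (polydisk (d + 2) ρ₀)) 
    {α β : ℝ} (hf : AnalyticOnNhd ℂ f (PSector (d + 2) P α β ρ₀)) (ξ : ℂ) {rξ : ℝ} (hrξ : 0 < rξ) 
    {g : ℕ → (Fin (d+2) → ℂ) → ℂ} {C A : ℝ} (hC : 0 < C) (hA : 0 < A)
    (ha : ∀ n, AnalyticOnNhd ℂ (g n) (polydisk (d + 2) rξ))
    (hb : ∀ n : ℕ, ∀ v ∈ polydisk (d + 2) rξ, ‖g n v‖ ≤ C * A ^ n * γ n)
    (he : ∀ n : ℕ, ∀ v ∈ PSector (d + 2) (fun w => P (blowUpC d ξ w)) α β rξ, blowUpC d ξ v ∈ PSector (d + 2) P α β ρ₀ →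
            ‖f (blowUpC d ξ v) - g n v‖ ≤ C * A ^ n * γ n * ‖P (blowUpC d ξ v)‖ ^ n) :
    Good d γ (fun v => P (blowUpC d 0 v)) (fun v => f (blowUpC d 0 v)) {v | blowUpC d 0 v ∈ PSector (d+2) P α β ρ₀} 
      {v | blowUpC d 0 v ∈ polydisk (d+2) ρ₁} {ξ} := by
  obtain ⟨r', hr', hr'm⟩ := cont_small (diff_bC d ξ).continuous (by funext i; simp [blowUpC]) h0
  have hs : ∀ v ∈ tube d (Metric.ball ξ (min rξ r')) (min rξ r'), mk2 v (v 0 - ξ) (v 1) ∈ polydisk (d+2) (min rξ r') := by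
    intro v hv j
    by_cases hj0 : j = 0
    · subst hj0
      simpa only [mk2_zero, ← dist_eq_norm] using Metric.mem_ball.1 hv.1
    · by_cases hj1 : j = 1
      · subst hj1; simpa only [mk2_one] using hv.2 1 hj0
      · simpa only [mk2_of_ne _ _ _ hj0 hj1] using hv.2 j hj0
  have hsub : PSector (d+2) P α β ρ₀ ⊆ polydisk (d+2) ρ₀ := fun x hx => (mem_PSector.1 hx).2.1
  have hm : 0 < min rξ r' := lt_min hrξ hr'
  refine ⟨Metric.ball ξ (min rξ r'), Metric.isOpen_ball, by simpa using hm, min rξ r', hm, ?_, 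
    fun n v => g n (mk2 v (v 0 - ξ) (v 1)), C, hC, A, hA, fun n => ?_, fun n v hv => ?_, fun n v hv hvS => ?_⟩
  · intro v hv
    have := hr'm _ (polydisk_mono (min_le_right _ _) (hs v hv))
    rwa [bC_shift] at this
  · exact an_comp (ha n) (tube_open Metric.isOpen_ball _) 
      (fun v _ => mk2_diff (by fun_prop) (by fun_prop) (by fun_prop)) (fun v hv => polydisk_mono (min_le_left _ _) (hs v hv))
  · exact hb n _ (polydisk_mono (min_le_left _ _) (hs v hv))
  · have := est_ext (diff_bC d ξ).continuous (PSector_open hP.continuousOn) (hP.continuousOn.mono hsub) hf.continuousOn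
      (fun x hx => (mem_PSector.1 hx).2.2) (ha n).continuousOn (he n) _ (polydisk_mono (min_le_left _ _) (hs v hv)) 
      (by rw [bC_shift]; exact hvS)
    simpa only [bC_shift] using this

lemma backward {d : ℕ} {ρ₀ : ℝ} (hρ₀ : 0 < ρ₀) {P f : (Fin (d + 2) → ℂ) → ℂ} {γ : ℕ → ℝ} (hγ : ∀ n, 0 < γ n)
    (hP : AnalyticOnNhd ℂ P (polydisk (d + 2) ρ₀)) (hPne : ∃ x ∈ polydisk (d + 2) ρ₀, P x ≠ 0)
    {α β : ℝ} (hαβ : α < β) (hf : AnalyticOnNhd ℂ f (PSector (d + 2) P α β ρ₀)) 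
    (hloc : ∀ ξ, Good d γ (fun v => P (blowUpC d 0 v)) (fun v => f (blowUpC d 0 v)) {v | blowUpC d 0 v ∈ PSector (d+2) P α β ρ₀} 
      {v | blowUpC d 0 v ∈ polydisk (d+2) (ρ₀/2)} {ξ})
    {rI : ℝ} (hrI : 0 < rI) {g : ℕ → (Fin (d+2) → ℂ) → ℂ} {C A : ℝ} (hC : 0 < C) (hA : 0 < A)
    (ha : ∀ n, AnalyticOnNhd ℂ (g n) (polydisk (d + 2) rI))
    (hb : ∀ n : ℕ, ∀ v ∈ polydisk (d + 2) rI, ‖g n v‖ ≤ C * A ^ n * γ n)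
    (he : ∀ n : ℕ, ∀ v ∈ PSector (d + 2) (fun w => P (blowUpInf d w)) α β rI, blowUpInf d v ∈ PSector (d + 2) P α β ρ₀ →
            ‖f (blowUpInf d v) - g n v‖ ≤ C * A ^ n * γ n * ‖P (blowUpInf d v)‖ ^ n) :
    ∃ ρ > 0, ∃ fn : ℕ → (Fin (d + 2) → ℂ) → ℂ, ∃ K A : ℝ, 0 < K ∧ 0 < A ∧
      (∀ n, AnalyticOnNhd ℂ (fn n) (polydisk (d + 2) ρ)) ∧
      (∀ n : ℕ, ∀ x ∈ polydisk (d + 2) ρ, ‖fn n x‖ ≤ K * A ^ n * γ n) ∧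
      (∀ n : ℕ, ∀ x ∈ PSector (d + 2) P α β ρ₀ ∩ polydisk (d + 2) ρ,
        ‖f x - fn n x‖ ≤ K * A ^ n * γ n * ‖P x‖ ^ n) := by
  obtain ⟨B, hB, X⟩ := mk_ctx (half_pos hρ₀) (half_lt_self hρ₀) hP hPne hαβ
  obtain ⟨r', hr', hr'm⟩ := cont_small (diff_bI d).continuous (by funext i; simp [blowUpInf]) (half_pos hρ₀)
  have hsub : PSector (d+2) P α β ρ₀ ⊆ polydisk (d+2) ρ₀ := fun x hx => (mem_PSector.1 hx).2.1
  have hml : polydisk (d+2) (min rI r') ⊆ polydisk (d+2) rI := polydisk_mono (min_le_left _ _)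
  obtain ⟨T, δ, r, C', A', hδ, hδT, hr, hC', hA', G0, GI, F0, FI, hov⟩ := 
    inf_glue X hγ hB (fun x hx => hP x (polydisk_mono (half_lt_self hρ₀).le hx)) hloc 
      (lt_min hrI hr') hC hA (fun v hv => hr'm v (polydisk_mono (min_le_right _ _) hv)) (gI := g)
      ⟨fun n v hv => ha n v (hml hv), fun n v hv => hb n v (hml hv), fun n v hv hvS => 
        est_ext (diff_bI d).continuous (PSector_open hP.continuousOn) (hP.continuousOn.mono hsub) hf.continuousOn
          (fun x hx => (mem_PSector.1 hx).2.2) (ha n).continuousOn (he n) _ (hml hv) hvS⟩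
  have hT : 0 < T := by linarith
  have hTd : 0 < T - δ := by linarith
  obtain ⟨ρ, hρ⟩ : ∃ ρ, ρ = min (r / 4) (r / 2 / T) := ⟨_, rfl⟩
  have hρ0 : 0 < ρ := by rw [hρ]; positivity
  have h1 : ρ ≤ r / 4 := by rw [hρ]; exact min_le_left _ _
  have h2 : ρ * T ≤ r / 2 := by
    rw [← le_div_iff₀ hT, hρ]; exact min_le_right _ _
  have hpd := fun n => push_down (M := C' * A' ^ n * γ n) hδ hδT hr h1 h2 (by have := hγ n; positivity) (F0.1 n) (FI.1 n) (FI.2.1 n) (hov n)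
  choose h hha hhb hhe using hpd
  refine ⟨ρ, hρ0, h, 2 * C', A', by positivity, hA', hha, fun n x hx => ?_, ?_⟩
  · exact (hhb n x hx).trans (le_of_eq (by ring))
  · rintro n x ⟨hxS, hx⟩
    have hx0 := (mem_PSector.1 hxS).1
    have hxp : 0 < ‖x 0‖ := norm_pos_iff.2 (hx0 0)
    have hxr : ∀ j, ‖x j‖ < r := fun j => (hx j).trans_le (by linarith)
    have key : ‖f x - h n x‖ ≤ C' * A' ^ n * γ n * ‖P x‖ ^ n := by
      by_cases hc : ‖x 1‖ < (T + δ) * ‖x 0‖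
      · rw [(hhe n x hx (hx0 0)).1 hc]
        have := F0.2.2 n (mk2 x (x 1 / x 0) (x 0)) (by
          refine mk2_mem ?_ (hxr 0) fun j _ _ => hxr j
          rw [mem_ball_zero_iff, norm_div, div_lt_iff₀ hxp]
          exact hc) (by rw [mem_ofPred_eq, bC_psi x (hx0 0)]; exact hxS)
        simpa only [bC_psi x (hx0 0)] using this
      · push Not at hc
        have hc' : (T - δ) * ‖x 0‖ < ‖x 1‖ := by nlinarith
        rw [(hhe n x hx (hx0 0)).2 hc']
        have := FI.2.2 n (mk2 x (x 0 / x 1) (x 1)) (by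
          refine mk2_mem ?_ (hxr 1) fun j _ _ => hxr j
          rw [mem_ball_zero_iff, norm_div, div_lt_div_iff₀ (norm_pos_iff.2 (hx0 1)) hTd]
          linarith) (by rw [mem_ofPred_eq, bI_psi x (hx0 1)]; exact hxS)
        simpa only [bI_psi x (hx0 1)] using this
    refine key.trans ?_
    have := hγ n
    have h5 : 0 ≤ C' * A' ^ n * γ n * ‖P x‖ ^ n := by positivity
    linarith

lemma forward {n m : ℕ} {b : (Fin n → ℂ) → Fin m → ℂ} (hb : Differentiable ℂ b) (hb0 : b 0 = 0) {ρ₀ : ℝ} (hρ₀ : 0 < ρ₀)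
    {P f : (Fin m → ℂ) → ℂ} {γ : ℕ → ℝ} {S : Set (Fin m → ℂ)} {Sb : ℝ → Set (Fin n → ℂ)} (hSb : ∀ r, Sb r ⊆ polydisk n r)
    {ρ : ℝ} (hρ : 0 < ρ) {fn : ℕ → (Fin m → ℂ) → ℂ} {K A : ℝ} (hK : 0 < K) (hA : 0 < A)
    (h1 : ∀ n, AnalyticOnNhd ℂ (fn n) (polydisk m ρ))
    (h2 : ∀ n : ℕ, ∀ x ∈ polydisk m ρ, ‖fn n x‖ ≤ K * A ^ n * γ n)
    (h3 : ∀ n : ℕ, ∀ x ∈ S ∩ polydisk m ρ, ‖f x - fn n x‖ ≤ K * A ^ n * γ n * ‖P x‖ ^ n) :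
    ∃ r > 0, (∀ v ∈ polydisk n r, b v ∈ polydisk m ρ₀) ∧
        ∃ g : ℕ → (Fin n → ℂ) → ℂ, ∃ C A : ℝ, 0 < C ∧ 0 < A ∧
          (∀ n', AnalyticOnNhd ℂ (g n') (polydisk n r)) ∧
          (∀ n' : ℕ, ∀ v ∈ polydisk n r, ‖g n' v‖ ≤ C * A ^ n' * γ n') ∧
          (∀ n' : ℕ, ∀ v ∈ Sb r, b v ∈ S → ‖f (b v) - g n' v‖ ≤ C * A ^ n' * γ n' * ‖P (b v)‖ ^ n') := by
  obtain ⟨r, hr, h⟩ := cont_small hb.continuous hb0 (lt_min hρ hρ₀)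
  have hm : ∀ v ∈ polydisk n r, b v ∈ polydisk m ρ := fun v hv => polydisk_mono (min_le_left _ _) (h v hv)
  refine ⟨r, hr, fun v hv => polydisk_mono (min_le_right _ _) (h v hv), fun k v => fn k (b v), K, A, hK, hA, ?_, ?_, ?_⟩
  · exact fun k => an_comp (h1 k) (polydisk_open _ _) (fun v _ => hb v) hm
  · exact fun k v hv => h2 k _ (hm v hv)
  · exact fun k v hv hvS => h3 k _ ⟨hvS, hm v (hSb r hv)⟩

/-- **Blow-up characterization of Gevrey asymptotics** (Proposition 7.5).
A holomorphic `f` on a `P`-sector admits a `P`-`s`-Gevrey asymptotic expansion in the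
estimate sense if and only if for every chart `ξ ∈ ℂ ∪ {∞}` of the blow-up, `f ∘ b_ξ`
admits a `(P∘b_ξ)`-`s`-Gevrey asymptotic expansion in the estimate sense. -/
theorem Gevrey_asymptotics_blow_up_characterization
    (d : ℕ) (s : ℝ) (hs : 0 < s) (ρ₀ : ℝ) (hρ₀ : 0 < ρ₀)
    (P : (Fin (d + 2) → ℂ) → ℂ) (hP : AnalyticOnNhd ℂ P (polydisk (d + 2) ρ₀))
    (hP0 : P 0 = 0) (hPne : ∃ x ∈ polydisk (d + 2) ρ₀, P x ≠ 0)
    (α β : ℝ) (hαβ : α < β) (h2π : β ≤ α + 2 * Real.pi)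
    (f : (Fin (d + 2) → ℂ) → ℂ)
    (hf : AnalyticOnNhd ℂ f (PSector (d + 2) P α β ρ₀)) :
    (∃ ρ > 0, ∃ fn : ℕ → (Fin (d + 2) → ℂ) → ℂ, ∃ K A : ℝ, 0 < K ∧ 0 < A ∧
      (∀ n, AnalyticOnNhd ℂ (fn n) (polydisk (d + 2) ρ)) ∧
      (∀ n : ℕ, ∀ x ∈ polydisk (d + 2) ρ,
        ‖fn n x‖ ≤ K * A ^ n * Real.Gamma (s * n + 1)) ∧
      (∀ n : ℕ, ∀ x ∈ PSector (d + 2) P α β ρ₀ ∩ polydisk (d + 2) ρ,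
        ‖f x - fn n x‖ ≤
          K * A ^ n * Real.Gamma (s * n + 1) * ‖P x‖ ^ n)) ↔
    ((∀ ξ : ℂ, ∃ rξ > 0,
        (∀ v ∈ polydisk (d + 2) rξ, blowUpC d ξ v ∈ polydisk (d + 2) ρ₀) ∧
        ∃ g : ℕ → (Fin (d + 2) → ℂ) → ℂ, ∃ C A : ℝ, 0 < C ∧ 0 < A ∧
          (∀ n, AnalyticOnNhd ℂ (g n) (polydisk (d + 2) rξ)) ∧
          (∀ n : ℕ, ∀ v ∈ polydisk (d + 2) rξ,
            ‖g n v‖ ≤ C * A ^ n * Real.Gamma (s * n + 1)) ∧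
          (∀ n : ℕ, ∀ v ∈ PSector (d + 2) (fun w => P (blowUpC d ξ w)) α β rξ,
            blowUpC d ξ v ∈ PSector (d + 2) P α β ρ₀ →
            ‖f (blowUpC d ξ v) - g n v‖ ≤
              C * A ^ n * Real.Gamma (s * n + 1) *
                ‖P (blowUpC d ξ v)‖ ^ n)) ∧
      (∃ rI > 0,
        (∀ v ∈ polydisk (d + 2) rI, blowUpInf d v ∈ polydisk (d + 2) ρ₀) ∧
        ∃ g : ℕ → (Fin (d + 2) → ℂ) → ℂ, ∃ C A : ℝ, 0 < C ∧ 0 < A ∧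
          (∀ n, AnalyticOnNhd ℂ (g n) (polydisk (d + 2) rI)) ∧
          (∀ n : ℕ, ∀ v ∈ polydisk (d + 2) rI,
            ‖g n v‖ ≤ C * A ^ n * Real.Gamma (s * n + 1)) ∧
          (∀ n : ℕ, ∀ v ∈ PSector (d + 2) (fun w => P (blowUpInf d w)) α β rI,
            blowUpInf d v ∈ PSector (d + 2) P α β ρ₀ →
            ‖f (blowUpInf d v) - g n v‖ ≤
              C * A ^ n * Real.Gamma (s * n + 1) *
                ‖P (blowUpInf d v)‖ ^ n))) := by
  have hγ : ∀ n : ℕ, 0 < Real.Gamma (s * n + 1) := fun n => Real.Gamma_pos_of_pos (by positivity)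
  constructor
  · rintro ⟨ρ, hρ, fn, K, A, hK, hA, h1, h2, h3⟩
    refine ⟨fun ξ => ?_, ?_⟩
    · exact forward (γ := fun n => Real.Gamma (s * n + 1)) (P := P) (f := f) (S := PSector (d + 2) P α β ρ₀)
        (Sb := fun r => PSector (d + 2) (fun w => P (blowUpC d ξ w)) α β r)
        (diff_bC d ξ) (by funext i; simp [blowUpC]) hρ₀ (fun r x hx => (mem_PSector.1 hx).2.1) hρ hK hA h1 h2 h3
    · exact forward (γ := fun n => Real.Gamma (s * n + 1)) (P := P) (f := f) (S := PSector (d + 2) P α β ρ₀)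
        (Sb := fun r => PSector (d + 2) (fun w => P (blowUpInf d w)) α β r)
        (diff_bI d) (by funext i; simp [blowUpInf]) hρ₀ (fun r x hx => (mem_PSector.1 hx).2.1) hρ hK hA h1 h2 h3
  · rintro ⟨hξ, rI, hrI, -, g, C, A, hC, hA, ha, hb, he⟩
    refine backward (γ := fun n => Real.Gamma (s * n + 1)) hρ₀ hγ hP hPne hαβ hf (fun ξ => ?_) hrI hC hA ha hb he
    obtain ⟨rξ, hrξ, -, g', C', A', hC', hA', ha', hb', he'⟩ := hξ ξ
    exact local_good (half_pos hρ₀) (half_lt_self hρ₀) hP hf ξ hrξ hC' hA' ha' hb' he'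
end
end

section
/- Exponential smallness of functions P-s-Gevrey asymptotic to zero (Lemma 7.13): Let d ≥ 1, s > 0, P holomorphic on D(0;R) with P(0) = 0 and P not identically zero, and Π = Π_P(θ_1,θ_2;R) a P-sector. Suppose f : Π → ℂ is holomorphic and there exist ρ > 0 and constants K, A > 0 such that |f(x)| ≤ K·A^N·Γ(sN+1)·|P(x)|^N for every N ∈ ℕ and every x ∈ Π ∩ D(0;ρ). Then there exist constants C, B > 0 such that |f(x)| ≤ C·exp(−B/|P(x)|^{1/s}) for all x ∈ Π ∩ D(0;ρ). -/
open Set Complex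

noncomputable section

lemma gamma_bound_aux (x a : ℝ) (hx : 0 ≤ x) (ha : 0 < a) (hxa : 2 * x ≤ a) :
    Real.Gamma (x + 1) ≤ 2 * (a ^ x * Real.exp (-x)) := by
  rw [Real.Gamma_eq_integral (by linarith)]
  have hint : MeasureTheory.IntegrableOn
      (fun r : ℝ => (a ^ x * Real.exp (-x)) * Real.exp (-(1/2) * r)) (Set.Ioi 0) :=
    (integrableOn_exp_mul_Ioi (by norm_num) 0).const_mul _
  have hval : ∫ r in Set.Ioi (0:ℝ), (a ^ x * Real.exp (-x)) * Real.exp (-(1/2) * r)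
      = 2 * (a ^ x * Real.exp (-x)) := by
    rw [MeasureTheory.integral_const_mul, integral_exp_mul_Ioi (by norm_num) 0]
    simp
    ring
  rw [← hval]
  refine MeasureTheory.setIntegral_mono_on (Real.GammaIntegral_convergent (by linarith)) hint
    measurableSet_Ioi ?_
  intro r hr
  have hr : 0 < r := hr
  have h1 : r ≤ a * Real.exp (r / a - 1) := by
    have := Real.add_one_le_exp (r / a - 1)
    have h2 : r / a ≤ Real.exp (r / a - 1) := by linarith
    rw [div_le_iff₀ ha] at h2
    linarith
  have h3 : r ^ x ≤ a ^ x * Real.exp (r * (x / a) - x) := by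
    calc r ^ x ≤ (a * Real.exp (r / a - 1)) ^ x := Real.rpow_le_rpow hr.le h1 hx
      _ = _ := by
        rw [Real.mul_rpow ha.le (Real.exp_pos _).le, ← Real.exp_mul]
        congr 2
        field_simp
  have h4 : x / a ≤ 1 / 2 := by
    rw [div_le_iff₀ ha]; linarith
  have h5 : r * (x / a) ≤ r * (1 / 2) := mul_le_mul_of_nonneg_left h4 hr.le
  have hax : 0 ≤ a ^ x := Real.rpow_nonneg ha.le x
  simp only [add_sub_cancel_right]
  calc Real.exp (-r) * r ^ x
      ≤ Real.exp (-r) * (a ^ x * Real.exp (r * (x / a) - x)) :=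
        mul_le_mul_of_nonneg_left h3 (Real.exp_pos _).le
    _ = a ^ x * Real.exp (-r + (r * (x / a) - x)) := by rw [Real.exp_add]; ring
    _ ≤ a ^ x * Real.exp (-x + -(1/2) * r) := by
        apply mul_le_mul_of_nonneg_left _ hax
        apply Real.exp_le_exp.mpr
        linarith
    _ = _ := by rw [Real.exp_add]; ring

/-- **Exponential smallness of functions `P`-`s`-Gevrey asymptotic to zero** (Lemma 7.13).
If `|f(x)| ≤ K·A^N·Γ(sN+1)·|P(x)|^N` for all `N` on a `P`-sector near `0`, then
`|f(x)| ≤ C·exp(−B/|P(x)|^{1/s})` there. -/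
theorem exponential_smallness_of_Gevrey_flat_functions
    (d : ℕ) (hd : 1 ≤ d) (s : ℝ) (hs : 0 < s) (R : ℝ) (hR : 0 < R)
    (P : (Fin d → ℂ) → ℂ) (hP : AnalyticOnNhd ℂ P (polydisk d R))
    (hP0 : P 0 = 0) (hPne : ∃ x ∈ polydisk d R, P x ≠ 0)
    (θ₁ θ₂ : ℝ) (hθ : θ₁ < θ₂) (hθ2 : θ₂ ≤ θ₁ + 2 * Real.pi)
    (f : (Fin d → ℂ) → ℂ) (hf : AnalyticOnNhd ℂ f (PSector d P θ₁ θ₂ R))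
    (ρ : ℝ) (hρ : 0 < ρ) (K A : ℝ) (hK : 0 < K) (hA : 0 < A)
    (hest : ∀ N : ℕ, ∀ x ∈ PSector d P θ₁ θ₂ R ∩ polydisk d ρ,
      ‖f x‖ ≤
        K * A ^ N * Real.Gamma (s * N + 1) * ‖P x‖ ^ N) :
    ∃ C > 0, ∃ B > 0, ∀ x ∈ PSector d P θ₁ θ₂ R ∩ polydisk d ρ,
      ‖f x‖ ≤ C * Real.exp (-B / ‖P x‖ ^ (1 / s)) := by
  refine ⟨2 * K * Real.exp s, by positivity, ((1 / A) ^ (1 / s)) / 2, by positivity, ?_⟩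
  intro x hx
  have ht : 0 < ‖P x‖ := norm_pos_iff.mpr hx.1.2.1
  have h := fun N => hest N x hx
  generalize ‖P x‖ = t at ht h
  have hw : 0 < (1 / (A * t)) ^ (1 / s) := by positivity
  set w := (1 / (A * t)) ^ (1 / s) with hwd
  have hws : w ^ s = 1 / (A * t) := by
    rw [hwd, ← Real.rpow_mul (by positivity), one_div_mul_cancel hs.ne', Real.rpow_one]
  set N := ⌊w / (2 * s)⌋₊ with hN
  have hN1 : (N : ℝ) ≤ w / (2 * s) := Nat.floor_le (by positivity)
  have hN2 : w / (2 * s) < N + 1 := Nat.lt_floor_add_one _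
  rw [le_div_iff₀ (by positivity)] at hN1
  rw [div_lt_iff₀ (by positivity)] at hN2
  have hG := gamma_bound_aux (s * N) w (by positivity) hw (by linarith)
  have hwp : w ^ (s * N) = (1 / (A * t)) ^ N := by
    rw [Real.rpow_mul hw.le, hws, Real.rpow_natCast]
  rw [hwp] at hG
  have hexp : -((1 / A) ^ (1 / s) / 2) / t ^ (1 / s) = - (w / 2) := by
    rw [hwd, ← div_div, Real.div_rpow (x := 1 / A) (by positivity) ht.le]
    ring
  rw [hexp]
  calc ‖f x‖ ≤ K * A ^ N * Real.Gamma (s * N + 1) * t ^ N := h N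
    _ ≤ K * A ^ N * (2 * ((1 / (A * t)) ^ N * Real.exp (-(s * N)))) * t ^ N := by gcongr
    _ = 2 * K * Real.exp (-(s * N)) := by
        rw [one_div, inv_pow, mul_pow]
        field_simp
    _ ≤ 2 * K * Real.exp (s + -(w / 2)) := by
        gcongr
        linarith
    _ = _ := by rw [Real.exp_add]; ring
end
end
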